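/- There exists a nonempty Π⁰₁ closed subset Q ⊆ ℝ² such that Q is a dendroid and Q contains no computable point. -/

import Mathlib

open Set Metric

section TopDefs

variable {α : Type*} [TopologicalSpace α]

/-- `A ⊆ α` is an arc with endpoints `x` and `y`:
a homeomorphic (continuous injective) image of `[0,1]` sending `0 ↦ x`, `1 ↦ y`. -/
def IsArc (A : Set α) (x y : α) : Prop :=
  ∃ f : Set.Icc (0:ℝ) 1 → α, Continuous f ∧ Function.Injective f ∧
    Set.range f = A ∧ f ⟨0, by norm_num⟩ = x ∧ f ⟨1, by norm_num⟩ = y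

/-- A continuum: a nonempty compact connected set. -/
def IsContinuum (X : Set α) : Prop := IsCompact X ∧ IsConnected X

/-- Any two distinct points of `X` are endpoints of an arc contained in `X`. -/
def ArcwiseConnectedSet (X : Set α) : Prop :=
  ∀ x ∈ X, ∀ y ∈ X, x ≠ y → ∃ A, A ⊆ X ∧ IsArc A x y

/-- `X` is unicoherent: for all closed connected `A, B ⊆ X` with `A ∪ B = X`,
the intersection `A ∩ B` is connected. -/
def UnicoherentSet (X : Set α) : Prop :=
  ∀ A B : Set α, A ⊆ X → B ⊆ X → IsClosed A → IsClosed B →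
    IsConnected A → IsConnected B → A ∪ B = X → IsConnected (A ∩ B)

/-- Every subcontinuum of `X` is unicoherent. -/
def HereditarilyUnicoherent (X : Set α) : Prop :=
  ∀ Y, Y ⊆ X → IsContinuum Y → UnicoherentSet Y

/-- A dendroid: an arcwise connected, hereditarily unicoherent continuum. -/
def IsDendroid (X : Set α) : Prop :=
  IsContinuum X ∧ ArcwiseConnectedSet X ∧ HereditarilyUnicoherent X

/-- The unit circle `S¹`. -/
def unitCircle : Set (EuclideanSpace ℝ (Fin 2)) := Metric.sphere 0 1

/-- A dendrite: a locally connected continuum containing no subset homeomorphic to `S¹`. -/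
def IsDendrite (X : Set α) : Prop :=
  IsContinuum X ∧ LocallyConnectedSpace ↥X ∧
    ∀ S : Set α, S ⊆ X → IsEmpty (↥S ≃ₜ ↥unitCircle)

/-- `x` and `y` lie in the same arc-component of `Y`. -/
def SameArcComponent (Y : Set α) (x y : α) : Prop :=
  x = y ∨ ∃ A, A ⊆ Y ∧ IsArc A x y

/-- `x` is a ramification point of `X`: `X \ {x}` has at least three arc-components. -/
def IsRamificationPoint (X : Set α) (x : α) : Prop :=
  x ∈ X ∧ ∃ u v w, u ∈ X \ {x} ∧ v ∈ X \ {x} ∧ w ∈ X \ {x} ∧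
    ¬ SameArcComponent (X \ {x}) u v ∧ ¬ SameArcComponent (X \ {x}) u w ∧
    ¬ SameArcComponent (X \ {x}) v w

/-- A tree (as a continuum): a dendrite with finitely many ramification points. -/
def IsTreeContinuum (X : Set α) : Prop :=
  IsDendrite X ∧ {x | IsRamificationPoint X x}.Finite

end TopDefs

section CompDefs

/-- The rational open ball in `ℝ²` coded by `((q₁, q₂), r)`. -/
def ballOfCode (c : (ℚ × ℚ) × ℚ) : Set (ℝ × ℝ) :=
  {x | dist x (((c.1.1 : ℝ), (c.1.2 : ℝ)) : ℝ × ℝ) < (c.2 : ℝ)}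

/-- A closed set `F ⊆ ℝ²` is `Π⁰₁` if it is the complement of the union of the rational
open balls coded by some c.e. set of codes. -/
def IsPi01Closed (F : Set (ℝ × ℝ)) : Prop :=
  ∃ W : (ℚ × ℚ) × ℚ → Prop, REPred W ∧ F = Set.univ \ ⋃ c ∈ {c | W c}, ballOfCode c

/-- `F ⊆ ℝ²` is c.e. closed if the set of codes of rational open balls meeting `F` is c.e. -/
def IsCEClosed (F : Set (ℝ × ℝ)) : Prop :=
  REPred (fun c : (ℚ × ℚ) × ℚ => (F ∩ ballOfCode c).Nonempty)

/-- A computable closed subset of `ℝ²`: both `Π⁰₁` and c.e. closed. -/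
def IsComputableClosed (F : Set (ℝ × ℝ)) : Prop :=
  IsPi01Closed F ∧ IsCEClosed F

/-- A point of `ℝ²` is computable if the set of codes of rational open balls
containing it is c.e. -/
def IsComputablePoint (x : ℝ × ℝ) : Prop :=
  REPred (fun c : (ℚ × ℚ) × ℚ => x ∈ ballOfCode c)

end CompDefs

section PsiDefs

/-- A tree of binary strings: a set of finite binary strings closed under prefixes. -/
def IsTreeOfStrings (T : Set (List Bool)) : Prop :=
  ∀ σ ∈ T, ∀ τ : List Bool, τ <+: σ → τ ∈ T

/-- The point `ψ(σ) ∈ ℝ²` associated with the binary string `σ`. -/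
noncomputable def psiPt (σ : List Bool) : ℝ × ℝ :=
  ((3:ℝ) ^ (-(σ.length : ℤ)) / 2 +
      2 * ∑ i ∈ Finset.range σ.length,
        (if σ.getD i false then (3:ℝ) ^ (-((i : ℤ) + 1)) else 0),
    (2:ℝ) ^ (-(σ.length : ℤ)))

/-- The planar embedding `Ψ(T)` of a tree `T` of binary strings: the closure of the union
of the segments from `ψ(σ⁻)` to `ψ(σ)` over nonempty `σ ∈ T` (together with the points
`ψ(σ)`, `σ ∈ T`, which makes no difference except for the degenerate trees `∅`, `{⟨⟩}`). -/
noncomputable def PsiSet (T : Set (List Bool)) : Set (ℝ × ℝ) :=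
  closure (psiPt '' T ∪ ⋃ σ ∈ T, ⋃ (_ : σ ≠ []), segment ℝ (psiPt σ.dropLast) (psiPt σ))

end PsiDefs

section RatComp
open Encodable Denumerable

/-- the underlying (non-surjective) encoding of `ℚ` -/
def eQ (q : ℚ) : ℕ := @encode ℚ Rat.instEncodable q
theorem eQ_eq (q : ℚ) : eQ q = Nat.pair (encode q.num) q.den := rfl
theorem encZ (z:ℤ) : encode z = 2 * z.toNat + 2 * (-z).toNat - (if z < 0 then 1 else 0) := by
  cases z with
  | ofNat n => 
    change 2 * n = _
    split_ifs <;> simp at * <;> omega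
  | negSucc n =>
    change 2 * n + 1 = _
    simp [Int.negSucc_lt_zero]
    omega
instance decRangeEQ : DecidablePred (· ∈ Set.range eQ) := @decidableRangeEncode ℚ Rat.instEncodable
instance infRangeEQ : Infinite (Set.range eQ) := Infinite.of_injective _ (Equiv.ofInjective eQ (@encode_injective ℚ Rat.instEncodable)).injective
theorem eQ_ofNat (n:ℕ) : eQ (Denumerable.ofNat ℚ n) = Nat.Subtype.ofNat (Set.range eQ) n := by
  have : Denumerable.ofNat ℚ n = (@equivRangeEncode ℚ Rat.instEncodable).symm (Nat.Subtype.ofNat (Set.range eQ) n) := rfl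
  rw [this]
  exact congrArg Subtype.val ((@equivRangeEncode ℚ Rat.instEncodable).apply_symm_apply _)

theorem mem_range_eQ (m : ℕ) : m ∈ Set.range eQ ↔
    0 < m.unpair.2 ∧ ∀ d < m.unpair.2 + 1, ¬ (2 ≤ d ∧ ((m.unpair.1 + 1) / 2) % d = 0 ∧ m.unpair.2 % d = 0) := by
  have key : ∀ a b : ℕ, 0 < b → ((∀ d < b + 1, ¬ (2 ≤ d ∧ a % d = 0 ∧ b % d = 0)) ↔ a.Coprime b) := by
    intro a b hb
    constructor
    · intro h
      by_contra hc
      have h1 : Nat.gcd a b ≠ 1 := hc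
      have h0 : 0 < Nat.gcd a b := Nat.gcd_pos_of_pos_right _ hb
      have h2 : Nat.gcd a b ≤ b := Nat.gcd_le_right _ hb
      exact h (Nat.gcd a b) (by omega) ⟨by omega, Nat.mod_eq_zero_of_dvd (Nat.gcd_dvd_left _ _), Nat.mod_eq_zero_of_dvd (Nat.gcd_dvd_right _ _)⟩
    · rintro h d - ⟨h2, h3, h4⟩
      have := Nat.dvd_gcd (Nat.dvd_of_mod_eq_zero h3) (Nat.dvd_of_mod_eq_zero h4)
      rw [h] at this
      have := Nat.le_of_dvd one_pos this
      omega
  have abs : ∀ z : ℤ, (encode z + 1) / 2 = z.natAbs := by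
    intro z
    rw [encZ]
    split_ifs <;> omega
  constructor
  · rintro ⟨q, rfl⟩
    rw [eQ_eq]
    simp only [Nat.unpair_pair]
    refine ⟨q.pos, ?_⟩
    rw [key _ _ q.pos, abs]
    exact q.reduced
  · rintro ⟨h1, h2⟩
    rw [key _ _ h1] at h2
    have h3 : encode (ofNat ℤ m.unpair.1) = m.unpair.1 := Denumerable.encode_ofNat (α := ℤ) _
    have h4 := abs (ofNat ℤ m.unpair.1)
    rw [h3] at h4
    rw [h4] at h2
    refine ⟨⟨ofNat ℤ m.unpair.1, m.unpair.2, h1.ne', h2⟩, ?_⟩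
    rw [eQ_eq]
    change Nat.pair (encode (ofNat ℤ m.unpair.1)) m.unpair.2 = m
    rw [h3, Nat.pair_unpair]

theorem computablePred_range_eQ : ComputablePred (fun m => m ∈ Set.range eQ) := by
  apply PrimrecPred.computablePred
  have h1 : PrimrecRel (fun (d : ℕ) (m : ℕ) => ¬ (2 ≤ d ∧ ((m.unpair.1 + 1) / 2) % d = 0 ∧ m.unpair.2 % d = 0)) := by
    apply PrimrecPred.not
    refine PrimrecPred.and (Primrec.nat_le.comp (Primrec.const 2) Primrec.fst) (PrimrecPred.and ?_ ?_)
    · refine Primrec.eq.comp (Primrec.nat_mod.comp (Primrec.nat_div.comp (Primrec.succ.comp (Primrec.fst.comp (Primrec.unpair.comp Primrec.snd))) (Primrec.const 2)) Primrec.fst) (Primrec.const 0)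
    · exact Primrec.eq.comp (Primrec.nat_mod.comp (Primrec.snd.comp (Primrec.unpair.comp Primrec.snd)) Primrec.fst) (Primrec.const 0)
  have h2 := h1.forall_lt
  have h3 : PrimrecPred (fun m : ℕ => 0 < m.unpair.2 ∧ ∀ d < m.unpair.2 + 1, ¬ (2 ≤ d ∧ ((m.unpair.1 + 1) / 2) % d = 0 ∧ m.unpair.2 % d = 0)) := by
    refine PrimrecPred.and (Primrec.nat_lt.comp (Primrec.const 0) (Primrec.snd.comp Primrec.unpair)) ?_
    exact h2.comp (Primrec.succ.comp (Primrec.snd.comp Primrec.unpair)) Primrec.id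
  exact h3.of_eq fun m => (mem_range_eQ m).symm

theorem computable_eQ_ofNat : Computable (fun n => eQ (ofNat ℚ n)) := by
  have hex : ∀ x : ℕ, ∃ m, x + m + 1 ∈ Set.range eQ := by
    intro x
    have hinf : (Set.range eQ).Infinite := Set.infinite_coe_iff.1 infRangeEQ
    obtain ⟨y, hy, hxy⟩ := hinf.exists_gt x
    exact ⟨y - x - 1, by rwa [show x + (y - x - 1) + 1 = y by omega]⟩
  have hc : Computable (fun x => Nat.find (hex x)) := by
    refine Computable.find (P := fun x m => x + m + 1 ∈ Set.range eQ) ?_ hex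
    obtain ⟨f, hf, hf2⟩ := ComputablePred.computable_iff.1 computablePred_range_eQ
    refine ComputablePred.computable_iff.2 ⟨fun p : ℕ × ℕ => f (p.1 + p.2 + 1), ?_, ?_⟩
    · exact hf.comp ((Primrec.succ.comp (Primrec.nat_add.comp Primrec.fst Primrec.snd)).to_comp)
    · funext p
      exact congrFun hf2 (p.1 + p.2 + 1)
  have h : Computable (fun n : ℕ => Nat.rec (motive := fun _ => ℕ) ((Nat.Subtype.ofNat (Set.range eQ) 0 : ℕ)) (fun _ x => x + Nat.find (hex x) + 1) n) := by
    refine Computable.nat_rec Computable.id (Computable.const _) (h := fun _ p => p.2 + Nat.find (hex p.2) + 1) ?_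
    have h2 : Computable (fun p : ℕ × (ℕ × ℕ) => p.2.2) := Computable.snd.comp Computable.snd
    exact Computable.succ.comp (Primrec.nat_add.to_comp.comp h2 (hc.comp h2))
  refine h.of_eq fun n => ?_
  rw [eQ_ofNat]
  induction n with
  | zero => rfl
  | succ n ih =>
    simp only [ih]
    rfl

theorem computable_eQ : Computable eQ := by
  refine (computable_eQ_ofNat.comp Computable.encode).of_eq fun q => ?_
  exact congrArg eQ (Denumerable.ofNat_encode q)

/-- positive part of the numerator -/
def qp (q : ℚ) : ℕ := q.num.toNat
/-- negative part of the numerator -/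
def qm (q : ℚ) : ℕ := (-q.num).toNat

theorem computable_qd : Computable (fun q : ℚ => q.den) := by
  refine (Computable.snd.comp (Computable.unpair.comp computable_eQ)).of_eq fun q => ?_
  rw [eQ_eq]; simp

theorem computable_enum : Computable (fun q : ℚ => encode q.num) := by
  refine (Computable.fst.comp (Computable.unpair.comp computable_eQ)).of_eq fun q => ?_
  rw [eQ_eq]; simp

theorem computable_qp : Computable qp := by
  have h : Primrec (fun a : ℕ => if a % 2 = 0 then a / 2 else 0) := by
    refine Primrec.ite (Primrec.eq.comp (Primrec.nat_mod.comp Primrec.id (Primrec.const 2)) (Primrec.const 0)) (Primrec.nat_div.comp Primrec.id (Primrec.const 2)) (Primrec.const 0)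
  refine (h.to_comp.comp computable_enum).of_eq fun q => ?_
  rw [encZ, qp]
  split_ifs <;> omega

theorem computable_qm : Computable qm := by
  have h : Primrec (fun a : ℕ => if a % 2 = 0 then 0 else a / 2 + 1) := by
    refine Primrec.ite (Primrec.eq.comp (Primrec.nat_mod.comp Primrec.id (Primrec.const 2)) (Primrec.const 0)) (Primrec.const 0) (Primrec.succ.comp (Primrec.nat_div.comp Primrec.id (Primrec.const 2))) 
  refine (h.to_comp.comp computable_enum).of_eq fun q => ?_
  rw [encZ, qm]
  split_ifs <;> omega

theorem qrep (q : ℚ) : q = ((qp q : ℚ) - qm q) / q.den := by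
  have h : (qp q : ℤ) - qm q = q.num := by unfold qp qm; omega
  have h2 : (qp q : ℚ) - qm q = q.num := by exact_mod_cast h
  rw [h2, Rat.num_div_den]

/-- `(p - m)/(d+1)` -/
def fracN (t : (ℕ × ℕ) × ℕ) : ℚ := ((t.1.1 : ℚ) - t.1.2) / (t.2 + 1 : ℕ)

theorem fracN_iff (t : (ℕ × ℕ) × ℕ) (q : ℚ) : 
    qp q * (t.2 + 1) + t.1.2 * q.den = t.1.1 * q.den + qm q * (t.2+1) ↔ q = fracN t := by
  have hd : (q.den : ℚ) ≠ 0 := by exact_mod_cast q.den_nz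
  have ht : ((t.2 + 1 : ℕ) : ℚ) ≠ 0 := Nat.cast_ne_zero.2 (Nat.succ_ne_zero t.2)
  have : (qp q * (t.2 + 1) + t.1.2 * q.den = t.1.1 * q.den + qm q * (t.2+1)) ↔
    ((qp q : ℚ) * ((t.2 + 1 : ℕ):ℚ) + t.1.2 * q.den = t.1.1 * q.den + qm q * ((t.2+1 : ℕ) : ℚ)) := by
    constructor
    · intro h; exact_mod_cast h
    · intro h; exact_mod_cast h
  rw [this]
  conv_rhs => rw [qrep q]
  rw [fracN, div_eq_div_iff hd ht]
  constructor <;> intro h <;> linarith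

theorem computable_fracN : Computable fracN := by
  have hex : ∀ t : (ℕ × ℕ) × ℕ, ∃ n, ofNat ℚ n = fracN t := fun t => ⟨_, Denumerable.ofNat_encode (fracN t)⟩
  have hP : ComputablePred (fun p : ((ℕ × ℕ) × ℕ) × ℕ => ofNat ℚ p.2 = fracN p.1) := by
    have hq : Computable (fun p : ((ℕ × ℕ) × ℕ) × ℕ => ofNat ℚ p.2) := (Computable.ofNat ℚ).comp Computable.snd
    have h1 : Computable (fun p : ((ℕ × ℕ) × ℕ) × ℕ => (qp (ofNat ℚ p.2) * (p.1.2 + 1) + p.1.1.2 * (ofNat ℚ p.2).den)) := by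
      refine Primrec.nat_add.to_comp.comp (Primrec.nat_mul.to_comp.comp (computable_qp.comp hq) ?_) (Primrec.nat_mul.to_comp.comp ?_ (computable_qd.comp hq))
      · exact Computable.succ.comp (Computable.snd.comp Computable.fst)
      · exact Computable.snd.comp (Computable.fst.comp Computable.fst)
    have h2 : Computable (fun p : ((ℕ × ℕ) × ℕ) × ℕ => (p.1.1.1 * (ofNat ℚ p.2).den + qm (ofNat ℚ p.2) * (p.1.2 + 1))) := by
      refine Primrec.nat_add.to_comp.comp (Primrec.nat_mul.to_comp.comp ?_ (computable_qd.comp hq)) (Primrec.nat_mul.to_comp.comp (computable_qm.comp hq) ?_)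
      · exact Computable.fst.comp (Computable.fst.comp Computable.fst)
      · exact Computable.succ.comp (Computable.snd.comp Computable.fst)
    have h3 : Computable (fun p : ((ℕ × ℕ) × ℕ) × ℕ => decide ((qp (ofNat ℚ p.2) * (p.1.2 + 1) + p.1.1.2 * (ofNat ℚ p.2).den) = (p.1.1.1 * (ofNat ℚ p.2).den + qm (ofNat ℚ p.2) * (p.1.2 + 1)))) :=
      (PrimrecRel.decide Primrec.eq).to_comp.comp h1 h2
    refine ComputablePred.computable_iff.2 ⟨_, h3, ?_⟩
    funext p
    rw [decide_eq_true_eq, fracN_iff]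
  have h := (Computable.ofNat ℚ).comp (Computable.find (P := fun t n => ofNat ℚ n = fracN t) hP hex)
  exact h.of_eq fun t => Nat.find_spec (hex t)

theorem computable_Qadd : Computable₂ (fun a b : ℚ => a + b) := by
  have h1 : Computable (fun p : ℚ × ℚ => fracN ((qp p.1 * p.2.den + qp p.2 * p.1.den, qm p.1 * p.2.den + qm p.2 * p.1.den), p.1.den * p.2.den - 1)) := by
    have dA := computable_qd.comp (Computable.fst (α := ℚ) (β := ℚ))
    have dB := computable_qd.comp (Computable.snd (α := ℚ) (β := ℚ))
    have pA := computable_qp.comp (Computable.fst (α := ℚ) (β := ℚ))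
    have pB := computable_qp.comp (Computable.snd (α := ℚ) (β := ℚ))
    have mA := computable_qm.comp (Computable.fst (α := ℚ) (β := ℚ))
    have mB := computable_qm.comp (Computable.snd (α := ℚ) (β := ℚ))
    have add := Primrec.nat_add.to_comp
    have mul := Primrec.nat_mul.to_comp
    exact computable_fracN.comp (((add.comp (mul.comp pA dB) (mul.comp pB dA)).pair (add.comp (mul.comp mA dB) (mul.comp mB dA))).pair
      (Primrec.nat_sub.to_comp.comp (mul.comp dA dB) (Computable.const 1)))
  refine Computable.of_eq h1 fun p => ?_
  have hA : (p.1.den : ℚ) ≠ 0 := by exact_mod_cast p.1.den_nz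
  have hB : (p.2.den : ℚ) ≠ 0 := by exact_mod_cast p.2.den_nz
  have : p.1.den * p.2.den - 1 + 1 = p.1.den * p.2.den := Nat.sub_add_cancel (Nat.mul_pos p.1.pos p.2.pos)
  conv_rhs => rw [qrep p.1, qrep p.2]
  simp only [fracN, this]
  push_cast
  field_simp
  ring

theorem computable_Qmul : Computable₂ (fun a b : ℚ => a * b) := by
  have h1 : Computable (fun p : ℚ × ℚ => fracN ((qp p.1 * qp p.2 + qm p.1 * qm p.2, qm p.1 * qp p.2 + qp p.1 * qm p.2), p.1.den * p.2.den - 1)) := by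
    have dA := computable_qd.comp (Computable.fst (α := ℚ) (β := ℚ))
    have dB := computable_qd.comp (Computable.snd (α := ℚ) (β := ℚ))
    have pA := computable_qp.comp (Computable.fst (α := ℚ) (β := ℚ))
    have pB := computable_qp.comp (Computable.snd (α := ℚ) (β := ℚ))
    have mA := computable_qm.comp (Computable.fst (α := ℚ) (β := ℚ))
    have mB := computable_qm.comp (Computable.snd (α := ℚ) (β := ℚ))
    have add := Primrec.nat_add.to_comp
    have mul := Primrec.nat_mul.to_comp
    exact computable_fracN.comp (((add.comp (mul.comp pA pB) (mul.comp mA mB)).pair (add.comp (mul.comp mA pB) (mul.comp pA mB))).pair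
      (Primrec.nat_sub.to_comp.comp (mul.comp dA dB) (Computable.const 1)))
  refine Computable.of_eq h1 fun p => ?_
  have hA : (p.1.den : ℚ) ≠ 0 := by exact_mod_cast p.1.den_nz
  have hB : (p.2.den : ℚ) ≠ 0 := by exact_mod_cast p.2.den_nz
  have : p.1.den * p.2.den - 1 + 1 = p.1.den * p.2.den := Nat.sub_add_cancel (Nat.mul_pos p.1.pos p.2.pos)
  conv_rhs => rw [qrep p.1, qrep p.2]
  simp only [fracN, this]
  push_cast
  field_simp
  ring

theorem computable_Qneg : Computable (fun a : ℚ => -a) :=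
  (computable_Qmul.comp (Computable.const (-1)) Computable.id).of_eq fun a => by simp

theorem computable_Qsub : Computable₂ (fun a b : ℚ => a - b) :=
  Computable.of_eq (computable_Qadd.comp Computable.fst (computable_Qneg.comp Computable.snd)) 
    fun a => by simp [sub_eq_add_neg]

theorem computable_Qle : Computable₂ (fun a b : ℚ => decide (a ≤ b)) := by
  have h1 : Computable (fun p : ℚ × ℚ => decide (qp p.1 * p.2.den + qm p.2 * p.1.den ≤ qp p.2 * p.1.den + qm p.1 * p.2.den)) := by
    have dA := computable_qd.comp (Computable.fst (α := ℚ) (β := ℚ))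
    have dB := computable_qd.comp (Computable.snd (α := ℚ) (β := ℚ))
    have pA := computable_qp.comp (Computable.fst (α := ℚ) (β := ℚ))
    have pB := computable_qp.comp (Computable.snd (α := ℚ) (β := ℚ))
    have mA := computable_qm.comp (Computable.fst (α := ℚ) (β := ℚ))
    have mB := computable_qm.comp (Computable.snd (α := ℚ) (β := ℚ))
    have add := Primrec.nat_add.to_comp
    have mul := Primrec.nat_mul.to_comp
    exact (PrimrecRel.decide Primrec.nat_le).to_comp.comp (add.comp (mul.comp pA dB) (mul.comp mB dA)) (add.comp (mul.comp pB dA) (mul.comp mA dB))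
  refine Computable.of_eq h1 fun p => ?_
  have hA : (0:ℚ) < p.1.den := by exact_mod_cast p.1.pos
  have hB : (0:ℚ) < p.2.den := by exact_mod_cast p.2.pos
  refine decide_eq_decide.2 ?_
  conv_rhs => rw [qrep p.1, qrep p.2]
  rw [div_le_div_iff₀ hA hB]
  have : (qp p.1 * p.2.den + qm p.2 * p.1.den ≤ qp p.2 * p.1.den + qm p.1 * p.2.den) ↔
     ((qp p.1 :ℚ) * p.2.den + qm p.2 * p.1.den ≤ qp p.2 * p.1.den + qm p.1 * p.2.den) := by
    constructor
    · intro h; exact_mod_cast h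
    · intro h; exact_mod_cast h
  rw [this]
  constructor <;> intro h <;> linarith

theorem computable_Qinv : Computable (fun a : ℚ => a⁻¹) := by
  have h1 : Computable (fun p : ℚ => fracN ((if qp p ≤ 0 then 0 else p.den, if qm p ≤ 0 then 0 else p.den), qp p + qm p - 1)) := by
    have le : Primrec (fun p : ℕ × ℕ => if p.1 ≤ 0 then 0 else p.2) := 
      Primrec.ite (Primrec.nat_le.comp Primrec.fst (Primrec.const 0)) (Primrec.const 0) Primrec.snd
    have add := Primrec.nat_add.to_comp
    exact computable_fracN.comp (((le.to_comp.comp (computable_qp.pair computable_qd)).pair (le.to_comp.comp (computable_qm.pair computable_qd))).pair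
      (Primrec.nat_sub.to_comp.comp (add.comp computable_qp computable_qm) (Computable.const 1)))
  refine Computable.of_eq h1 fun p => ?_
  have hA : (p.den : ℚ) ≠ 0 := by exact_mod_cast p.den_nz
  conv_rhs => rw [qrep p]
  by_cases hp : qp p ≤ 0
  · by_cases hm : qm p ≤ 0
    · have e1 : qp p = 0 := by omega
      have e2 : qm p = 0 := by omega
      simp [fracN, e1, e2]
    · have e1 : qp p = 0 := by omega
      have e2 : 0 + qm p - 1 + 1 = qm p := by omega
      have : (qm p : ℚ) ≠ 0 := by exact_mod_cast (by omega : qm p ≠ 0)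
      simp only [fracN, e1, e2, hm, if_false, le_refl, if_true]
      push_cast
      field_simp
      simp
  · have e1 : qm p = 0 := by unfold qm qp at *; omega
    have e2 : qp p + 0 - 1 + 1 = qp p := by omega
    have : (qp p : ℚ) ≠ 0 := by exact_mod_cast (by omega : qp p ≠ 0)
    simp only [fracN, e1, e2, hp, if_false, le_refl, if_true]
    push_cast
    field_simp
    simp

theorem computable_Qdiv : Computable₂ (fun a b : ℚ => a / b) :=
  Computable.of_eq (computable_Qmul.comp Computable.fst (computable_Qinv.comp Computable.snd)) 
    fun a => by simp [div_eq_mul_inv]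

theorem computable_Qmax : Computable₂ (fun a b : ℚ => max a b) :=
  Computable.of_eq (Computable.cond computable_Qle Computable.snd Computable.fst)
    fun p => by 
      by_cases h : p.1 ≤ p.2
      · simp [h]
      · simp [h, le_of_not_ge h]

theorem computable_Qmin : Computable₂ (fun a b : ℚ => min a b) :=
  Computable.of_eq (Computable.cond computable_Qle Computable.fst Computable.snd)
    fun p => by 
      by_cases h : p.1 ≤ p.2
      · simp [h]
      · simp [h, le_of_not_ge h]

theorem computable_Qabs : Computable (fun a : ℚ => |a|) :=
  (computable_Qmax.comp Computable.id computable_Qneg).of_eq fun a => rfl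

/-- `2^{-n}` -/
def hp (n : ℕ) : ℚ := (1/2) ^ n
theorem computable_hp : Computable hp := by
  have : Computable (fun n : ℕ => Nat.rec (motive := fun _ => ℚ) 1 (fun _ x => x * (1/2)) n) := by
    refine Computable.nat_rec Computable.id (Computable.const _) (h := fun _ p => p.2 * (1/2)) ?_
    exact computable_Qmul.comp (Computable.snd.comp Computable.snd) (Computable.const _)
  refine this.of_eq fun n => ?_
  induction n with
  | zero => simp [hp]
  | succ n ih => simp only [ih]; simp [hp, pow_succ]
end RatComp

section REUtil
open Encodable Denumerable Nat.Partrec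

theorem REPred.of_exists_nat {α : Type*} [Primcodable α] {f : α → ℕ → Bool} (hf : Computable₂ f) :
    REPred (fun a => ∃ n, f a n = true) := by
  have h : Partrec (fun a => Nat.rfind (fun n => (f a n : Part Bool))) :=
    Partrec.rfind (p := fun a n => (f a n : Part Bool)) hf.partrec₂
  refine (Partrec.dom_re h).of_eq fun a => ?_
  refine Nat.rfind_dom.trans ?_
  constructor
  · rintro ⟨n, hn, -⟩
    exact ⟨n, by simpa using hn⟩
  · rintro ⟨n, hn⟩
    exact ⟨n, by simpa using hn, fun _ => trivial⟩

theorem REPred.exists_code {α : Type*} [Primcodable α] {p : α → Prop} (h : REPred p) :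
    ∃ c : Code, ∀ a, p a ↔ ∃ k, (Code.evaln k c (encode a)).isSome = true := by
  obtain ⟨c, hc⟩ := Code.exists_code.1 h
  refine ⟨c, fun a => ?_⟩
  have h1 : p a ↔ (c.eval (encode a)).Dom := by
    rw [hc]
    simp [Part.assert]
  rw [h1, Part.dom_iff_mem]
  constructor
  · rintro ⟨y, hy⟩
    obtain ⟨k, hk⟩ := Code.evaln_complete.1 hy
    exact ⟨k, by rw [Option.mem_def.1 hk]; rfl⟩
  · rintro ⟨k, hk⟩
    obtain ⟨y, hy⟩ := Option.isSome_iff_exists.1 hk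
    exact ⟨y, Code.evaln_sound hy⟩

theorem Computable.exists_code_fun {f : ℕ → ℚ} (h : Computable f) :
    ∃ c : Code, ∀ n, ∃ k m, Code.evaln k c n = some m ∧ Denumerable.ofNat ℚ m = f n := by
  obtain ⟨c, hc⟩ := Code.exists_code.1 h
  refine ⟨c, fun n => ?_⟩
  have h2 : ∃ m, m ∈ c.eval n ∧ Denumerable.ofNat ℚ m = f n := by
    refine ⟨_, ?_, Denumerable.ofNat_encode (f n)⟩
    rw [hc]
    simp
  obtain ⟨m, hm, hm2⟩ := h2
  obtain ⟨k, hk⟩ := Code.evaln_complete.1 hm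
  exact ⟨k, m, hk, hm2⟩

theorem computable_evaln (c : Code) : Computable₂ (fun (k n : ℕ) => (Code.evaln k c n).isSome) := by
  have h := Code.primrec_evaln.to_comp.comp (((Computable.fst (α := ℕ) (β := ℕ)).pair (Computable.const c)).pair Computable.snd)
  exact Computable.of_eq (Primrec.option_isSome.to_comp.comp h) fun p => rfl

theorem ComputablePred.of_bool {α : Type*} [Primcodable α] {p : α → Prop} {f : α → Bool} (hf : Computable f) (h : ∀ a, p a ↔ f a = true) :
   ComputablePred p := ComputablePred.computable_iff.2 ⟨f, hf, funext fun a => propext (h a)⟩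

/-- the `Primcodable` encoding of codes of balls -/
def encC (c : (ℚ × ℚ) × ℚ) : ℕ := @encode _ Primcodable.toEncodable c
theorem computable_encC : Computable encC := Computable.encode

theorem IsComputablePoint.approx {x : ℝ × ℝ} (hx : IsComputablePoint x) :
    ∃ f : ℕ → ℚ × ℚ, Computable f ∧ ∀ k, dist x (((f k).1 : ℝ), ((f k).2 : ℝ)) < (hp k : ℝ) := by
  obtain ⟨c, hc'⟩ := REPred.exists_code hx
  have hc : ∀ a, x ∈ ballOfCode a ↔ ∃ k, (Code.evaln k c (encC a)).isSome = true := hc'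
  let g : ℕ → ℚ × ℚ := fun n => (ofNat ℚ n.unpair.1.unpair.1, ofNat ℚ n.unpair.1.unpair.2)
  have hg : Computable g := by
    have h1 : Computable (fun n : ℕ => n.unpair.1.unpair) := Computable.unpair.comp (Computable.fst.comp Computable.unpair)
    exact ((Computable.ofNat ℚ).comp (Computable.fst.comp h1)).pair ((Computable.ofNat ℚ).comp (Computable.snd.comp h1))
  have hex : ∀ k : ℕ, ∃ n : ℕ, (Code.evaln n.unpair.2 c (encC (g n, hp k))).isSome = true := by
    intro k
    have hpos : (0:ℝ) < (hp k : ℝ) := by simp [hp]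
    obtain ⟨a, ha1, ha2⟩ := exists_rat_btwn (show x.1 - (hp k : ℝ) < x.1 by linarith)
    obtain ⟨b, hb1, hb2⟩ := exists_rat_btwn (show x.2 - (hp k : ℝ) < x.2 by linarith)
    have hm : x ∈ ballOfCode ((a, b), hp k) := by
      simp only [ballOfCode, Set.mem_ofPred_eq, Prod.dist_eq, Real.dist_eq]
      refine max_lt ?_ ?_ <;> rw [abs_lt] <;> constructor <;> linarith
    obtain ⟨t, ht⟩ := (hc _).1 hm
    refine ⟨Nat.pair (Nat.pair ((Denumerable.eqv ℚ) a) ((Denumerable.eqv ℚ) b)) t, ?_⟩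
    have : g (Nat.pair (Nat.pair ((Denumerable.eqv ℚ) a) ((Denumerable.eqv ℚ) b)) t) = (a, b) := by
      simp only [g, Nat.unpair_pair]
      exact Prod.ext (Denumerable.ofNat_encode a) (Denumerable.ofNat_encode b)
    rw [this]
    rw [Nat.unpair_pair]
    exact ht
  have hcomp : Computable (fun k => Nat.find (hex k)) := by
    refine Computable.find (P := fun k n => (Code.evaln n.unpair.2 c (encC (g n, hp k))).isSome = true) ?_ hex
    refine ComputablePred.of_bool (f := fun p : ℕ × ℕ => (Code.evaln p.2.unpair.2 c (encC (g p.2, hp p.1))).isSome) ?_ fun _ => Iff.rfl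
    exact (computable_evaln c).comp (Computable.snd.comp (Computable.unpair.comp Computable.snd))
      (computable_encC.comp ((hg.comp Computable.snd).pair (computable_hp.comp Computable.fst)))
  refine ⟨fun k => g (Nat.find (hex k)), hg.comp hcomp, fun k => ?_⟩
  have := (hc _).2 ⟨_, Nat.find_spec (hex k)⟩
  exact this
end REUtil

section FanTop
open Set

/-- the cone over `P` -/
def FanSet (P : Set ℝ) : Set (ℝ × ℝ) := {z | ∃ t ∈ Icc (0:ℝ) 1, ∃ c ∈ P, z = (t, t * c)}

variable {P : Set ℝ}

theorem FanSet.compact (hP : IsCompact P) : IsCompact (FanSet P) := by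
  have : FanSet P = (fun p : ℝ × ℝ => (p.1, p.1 * p.2)) '' (Icc (0:ℝ) 1 ×ˢ P) := by
    ext z; constructor
    · rintro ⟨t, ht, c, hc, rfl⟩
      exact ⟨(t, c), ⟨ht, hc⟩, rfl⟩
    · rintro ⟨⟨t, c⟩, ⟨ht, hc⟩, rfl⟩
      exact ⟨t, ht, c, hc, rfl⟩
  rw [this]
  exact (isCompact_Icc.prod hP).image (by fun_prop)

theorem FanSet.smul_mem {z : ℝ × ℝ} (hz : z ∈ FanSet P) {s : ℝ} (hs : s ∈ Icc (0:ℝ) 1) : s • z ∈ FanSet P := by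
  obtain ⟨t, ht, c, hc, rfl⟩ := hz
  refine ⟨s * t, ⟨mul_nonneg hs.1 ht.1, ?_⟩, c, hc, by simp [mul_assoc]⟩
  calc s * t ≤ 1 * 1 := mul_le_mul hs.2 ht.2 ht.1 zero_le_one
    _ = 1 := one_mul 1

theorem FanSet.zero_mem (hP : P.Nonempty) : (0 : ℝ × ℝ) ∈ FanSet P := by
  obtain ⟨c, hc⟩ := hP
  exact ⟨0, by simp, c, hc, by simp [← Prod.zero_eq_mk]⟩

theorem preconn_of_star {C : Set (ℝ × ℝ)} (h : ∀ z ∈ C, ∀ s ∈ Icc (0:ℝ) 1, s • z ∈ C) : IsPreconnected C := by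
  refine isPreconnected_of_forall 0 fun z hz => ?_
  refine ⟨(fun s : ℝ => s • z) '' Icc 0 1, ?_, ⟨0, by simp, by simp⟩, ⟨1, by simp, by simp⟩, ?_⟩
  · rintro _ ⟨s, hs, rfl⟩; exact h z hz s hs
  · exact isPreconnected_Icc.image _ (by fun_prop)

/-- two points on a common ray -/
theorem FanSet.collinear {x y : ℝ × ℝ} (hx : x ∈ FanSet P) (hy : y ∈ FanSet P) (h : x.1 * y.2 = x.2 * y.1) :
    ∃ c ∈ P, ∃ a ∈ Icc (0:ℝ) 1, ∃ b ∈ Icc (0:ℝ) 1, x = (a, a * c) ∧ y = (b, b * c) := by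
  obtain ⟨a, ha, c, hc, rfl⟩ := hx
  obtain ⟨b, hb, d, hd, rfl⟩ := hy
  simp only at h
  by_cases ha0 : a = 0
  · exact ⟨d, hd, a, ha, b, hb, by simp [ha0], rfl⟩
  by_cases hb0 : b = 0
  · exact ⟨c, hc, a, ha, b, hb, rfl, by simp [hb0]⟩
  have : c = d := by
    have h1 : (a * b) * (c - d) = 0 := by linarith
    have h2 := (mul_eq_zero.1 h1).resolve_left (mul_ne_zero ha0 hb0)
    linarith
  subst this
  exact ⟨c, hc, a, ha, b, hb, rfl, rfl⟩

theorem FanSet.arcs : ArcwiseConnectedSet (FanSet P) := by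
  intro x hx y hy hxy
  by_cases hdet : x.1 * y.2 = x.2 * y.1
  · obtain ⟨c, hc, a, ha, b, hb, rfl, rfl⟩ := FanSet.collinear hx hy hdet
    have hab : a ≠ b := by rintro rfl; exact hxy rfl
    let f : Icc (0:ℝ) 1 → ℝ × ℝ := fun t => (a + t * (b - a), (a + t * (b - a)) * c)
    refine ⟨range f, ?_, f, ?_, ?_, rfl, ?_, ?_⟩
    · rintro _ ⟨⟨t, ht⟩, rfl⟩
      refine ⟨a + t * (b - a), ?_, c, hc, rfl⟩
      have := convex_Icc (0:ℝ) 1 ha hb (sub_nonneg.2 ht.2) ht.1 (by ring)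
      convert this using 1
      simp; ring
    · fun_prop
    · rintro ⟨s, hs⟩ ⟨t, ht⟩ h
      have h1 : a + s * (b - a) = a + t * (b - a) := congrArg Prod.fst h
      have h2 : s * (b - a) = t * (b - a) := by linarith
      exact Subtype.ext (mul_right_cancel₀ (sub_ne_zero.2 hab.symm) h2)
    · simp [f]
    · simp [f]
  · let f : Icc (0:ℝ) 1 → ℝ × ℝ := fun t => max (1 - 2 * (t:ℝ)) 0 • x + max (2 * (t:ℝ) - 1) 0 • y
    refine ⟨range f, ?_, f, ?_, ?_, rfl, ?_, ?_⟩
    · rintro _ ⟨⟨t, ht⟩, rfl⟩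
      simp only [f]
      rcases le_total (2 * t) 1 with h | h
      · rw [max_eq_right (a := 2 * t - 1) (by linarith), zero_smul, add_zero]
        exact FanSet.smul_mem hx ⟨le_max_right _ _, max_le (by linarith [ht.1]) zero_le_one⟩
      · rw [max_eq_right (a := 1 - 2 * t) (by linarith), zero_smul, zero_add]
        exact FanSet.smul_mem hy ⟨le_max_right _ _, max_le (by linarith [ht.2]) zero_le_one⟩
    · fun_prop
    · rintro ⟨s, hs⟩ ⟨t, ht⟩ h
      have key : ∀ u : ℝ, max (1 - 2 * u) 0 - max (2 * u - 1) 0 = 1 - 2 * u := by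
        intro u
        rcases le_total (2 * u) 1 with h | h
        · rw [max_eq_left (by linarith), max_eq_right (by linarith)]; ring
        · rw [max_eq_right (by linarith), max_eq_left (by linarith)]; ring
      have ks := key s
      have kt := key t
      have h1 := congrArg Prod.fst h
      have h2 := congrArg Prod.snd h
      simp only [f, Prod.fst_add, Prod.smul_fst, Prod.snd_add, Prod.smul_snd, smul_eq_mul] at h1 h2
      set α := max (1 - 2 * s) 0
      set β := max (2 * s - 1) 0
      set α' := max (1 - 2 * t) 0
      set β' := max (2 * t - 1) 0
      have hd : x.1 * y.2 - x.2 * y.1 ≠ 0 := sub_ne_zero.2 hdet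
      have e1 : (α - α') * (x.1 * y.2 - x.2 * y.1) = 0 := by linear_combination y.2 * h1 - y.1 * h2
      have e2 : (β - β') * (x.1 * y.2 - x.2 * y.1) = 0 := by linear_combination x.1 * h2 - x.2 * h1
      have e3 := (mul_eq_zero.1 e1).resolve_right hd
      have e4 := (mul_eq_zero.1 e2).resolve_right hd
      exact Subtype.ext (by simp only; linarith)
    · simp [f]
    · simp [f]; norm_num

/-- `P` has no interior: between any two reals there is a point outside of `P`. -/
def Gappy (P : Set ℝ) : Prop := ∀ a b, a < b → ∃ r, a < r ∧ r < b ∧ r ∉ P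

theorem FanSet.not_line {r : ℝ} (hr : r ∉ P) {z : ℝ × ℝ} (hz : z ∈ FanSet P) (h : z.2 = r * z.1) : z = 0 := by
  obtain ⟨a, ha, c, hc, rfl⟩ := hz
  by_cases ha0 : a = 0
  · simp [ha0]
  · simp only at h
    rw [mul_comm r] at h
    exact absurd (mul_left_cancel₀ ha0 h ▸ hc) hr

theorem FanSet.star (hP : Gappy P) {A : Set (ℝ × ℝ)} (hA : A ⊆ FanSet P) (hcl : IsClosed A) (hc : IsPreconnected A)
    (h0 : (0 : ℝ × ℝ) ∈ A) : ∀ z ∈ A, ∀ s ∈ Icc (0:ℝ) 1, s • z ∈ A := by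
  intro z hz σ hσ
  by_contra hn
  obtain ⟨t, ht, c, hcP, rfl⟩ := hA hz
  have hs0 : σ • ((t, t * c) : ℝ × ℝ) = (σ * t, σ * t * c) := by simp [mul_assoc]
  rw [hs0] at hn
  set s := σ * t with hs
  have hs1 : 0 < s := by
    rcases (mul_nonneg hσ.1 ht.1).lt_or_eq with h | h
    · exact h
    · exfalso; apply hn; rw [hs, ← h]; simpa [← Prod.zero_eq_mk] using h0
  have hs2 : s < t := by
    have : s ≤ 1 * t := mul_le_mul_of_nonneg_right hσ.2 ht.1
    rcases (this.trans_eq (one_mul t)).lt_or_eq with h | h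
    · exact h
    · exfalso; apply hn; rw [h]; exact hz
  obtain ⟨ε, hε, hball⟩ := Metric.isOpen_iff.1 hcl.isOpen_compl _ hn
  have hgap : 0 < ε / s := div_pos hε hs1
  obtain ⟨r1, h1a, h1b, h1P⟩ := hP (c - ε / s) c (by linarith)
  obtain ⟨r2, h2a, h2b, h2P⟩ := hP c (c + ε / s) (by linarith)
  let U : Set (ℝ × ℝ) := {w | s < w.1 ∧ r1 * w.1 < w.2 ∧ w.2 < r2 * w.1}
  let V : Set (ℝ × ℝ) := {w | w.1 < s ∨ w.2 < r1 * w.1 ∨ r2 * w.1 < w.2}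
  have o1 : IsOpen {w : ℝ × ℝ | s < w.1} := isOpen_lt (by fun_prop) (by fun_prop)
  have o2 : IsOpen {w : ℝ × ℝ | r1 * w.1 < w.2} := isOpen_lt (by fun_prop) (by fun_prop)
  have o3 : IsOpen {w : ℝ × ℝ | w.2 < r2 * w.1} := isOpen_lt (by fun_prop) (by fun_prop)
  have o4 : IsOpen {w : ℝ × ℝ | w.1 < s} := isOpen_lt (by fun_prop) (by fun_prop)
  have o5 : IsOpen {w : ℝ × ℝ | w.2 < r1 * w.1} := isOpen_lt (by fun_prop) (by fun_prop)
  have o6 : IsOpen {w : ℝ × ℝ | r2 * w.1 < w.2} := isOpen_lt (by fun_prop) (by fun_prop)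
  have hU : IsOpen U := o1.inter (o2.inter o3)
  have hV : IsOpen V := o4.union (o5.union o6)
  have hcov : A ⊆ U ∪ V := by
    intro w hw
    by_contra hnw
    have hnU : w ∉ U := fun h => hnw (Or.inl h)
    have hnV : w ∉ V := fun h => hnw (Or.inr h)
    have hnV' : ¬ (w.1 < s ∨ w.2 < r1 * w.1 ∨ r2 * w.1 < w.2) := hnV
    push Not at hnV'
    obtain ⟨v1, v2, v3⟩ := hnV'
    have hw0 : w ≠ 0 := by rintro rfl; simp at v1; linarith
    have e1 : r1 * w.1 < w.2 := lt_of_le_of_ne v2 (fun h => hw0 (FanSet.not_line h1P (hA hw) h.symm))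
    have e2 : w.2 < r2 * w.1 := lt_of_le_of_ne v3 (fun h => hw0 (FanSet.not_line h2P (hA hw) h))
    have e3 : w.1 = s := by
      by_contra h
      exact hnU ⟨lt_of_le_of_ne v1 (Ne.symm h), e1, e2⟩
    refine hball ?_ hw
    rw [Metric.mem_ball, Prod.dist_eq, Real.dist_eq, Real.dist_eq]
    refine max_lt (by simpa [e3] using hε) ?_
    rw [e3] at e1 e2
    have e4 : (ε / s) * s = ε := div_mul_cancel₀ _ hs1.ne'
    have f1 : (c - ε / s) * s < r1 * s := mul_lt_mul_of_pos_right h1a hs1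
    have f2 : r2 * s < (c + ε / s) * s := mul_lt_mul_of_pos_right h2b hs1
    rw [abs_lt]
    constructor <;> simp only <;> nlinarith
  have hdis : ¬ (A ∩ (U ∩ V)).Nonempty := by
    rintro ⟨w, -, ⟨u1, u2, u3⟩, v⟩
    rcases v with v | v | v <;> linarith
  apply hdis
  refine hc U V hU hV hcov ⟨_, hz, hs2, ?_, ?_⟩ ⟨0, h0, Or.inl hs1⟩
  · simp only; nlinarith
  · simp only; nlinarith

theorem FanSet.ray (hP : Gappy P) {A : Set (ℝ × ℝ)} (hA : A ⊆ FanSet P) (hc : IsPreconnected A)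
    (h0 : (0 : ℝ × ℝ) ∉ A) : ∀ x ∈ A, ∀ y ∈ A, x.1 * y.2 = x.2 * y.1 := by
  have main : ∀ a c b d : ℝ, 0 ≤ a → 0 ≤ b → (a, a * c) ∈ A → (b, b * d) ∈ A → c < d → False := by
    intro a c b d ha hb hx hy hcd
    have ha : 0 < a := lt_of_le_of_ne ha (by rintro rfl; apply h0; simpa [← Prod.zero_eq_mk] using hx)
    have hb : 0 < b := lt_of_le_of_ne hb (by rintro rfl; apply h0; simpa [← Prod.zero_eq_mk] using hy)
    obtain ⟨r, h1, h2, h3⟩ := hP c d hcd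
    have := hc {w | w.2 < r * w.1} {w | r * w.1 < w.2} (isOpen_lt (by fun_prop) (by fun_prop)) (isOpen_lt (by fun_prop) (by fun_prop))
      ?_ ⟨_, hx, ?_⟩ ⟨_, hy, ?_⟩
    · obtain ⟨w, -, w1, w2⟩ := this
      have w1' : w.2 < r * w.1 := w1
      have w2' : r * w.1 < w.2 := w2
      linarith
    · intro w hw
      rcases lt_trichotomy w.2 (r * w.1) with h | h | h
      · exact Or.inl h
      · exact absurd (FanSet.not_line h3 (hA hw) h ▸ hw) h0
      · exact Or.inr h
    · change a * c < r * a; nlinarith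
    · change r * b < b * d; nlinarith
  intro x hx y hy
  obtain ⟨a, ha, c, hc, rfl⟩ := hA hx
  obtain ⟨b, hb, d, hd, rfl⟩ := hA hy
  rcases lt_trichotomy c d with h | h | h
  · exact (main a c b d ha.1 hb.1 hx hy h).elim
  · subst h; simp only; ring
  · exact (main b d a c hb.1 ha.1 hy hx h).elim

theorem FanSet.seg (hP : Gappy P) {A : Set (ℝ × ℝ)} (hA : A ⊆ FanSet P) (hcl : IsClosed A) (hc : IsPreconnected A)
    {a b c u : ℝ} (ha : 0 ≤ a) (hau : a ≤ u) (hub : u ≤ b) (hxa : (a, a * c) ∈ A) (hxb : (b, b * c) ∈ A) :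
    (u, u * c) ∈ A := by
  by_cases h0 : (0 : ℝ × ℝ) ∈ A
  · by_cases hb : b = 0
    · have : u = b := by linarith
      rwa [this]
    · have hb' : 0 < b := lt_of_le_of_ne (by linarith) (Ne.symm hb)
      have := FanSet.star hP hA hcl hc h0 _ hxb (u / b) ⟨div_nonneg (by linarith) hb'.le, (div_le_one hb').2 hub⟩
      convert this using 1
      simp only [Prod.smul_mk, smul_eq_mul, Prod.mk.injEq]
      constructor <;> field_simp
  · have hI : IsPreconnected (Prod.fst '' A) := hc.image _ continuous_fst.continuousOn
    obtain ⟨w, hw, hwu⟩ := hI.ordConnected.out ⟨_, hxa, rfl⟩ ⟨_, hxb, rfl⟩ ⟨hau, hub⟩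
    have h1 := FanSet.ray hP hA hc h0 _ hxa _ hw
    have ha0 : a ≠ 0 := by rintro rfl; apply h0; simpa [← Prod.zero_eq_mk] using hxa
    have : w = (u, u * c) := by
      refine Prod.ext hwu ?_
      simp only at h1 ⊢
      rw [hwu] at h1
      have : a * w.2 = a * (u * c) := by linarith
      exact mul_left_cancel₀ ha0 this
    exact this ▸ hw

theorem FanSet.hu (hP : Gappy P) : HereditarilyUnicoherent (FanSet P) := by
  intro Y hY hYc A B hAY hBY hAc hBc hA hB hAB
  have hne : (A ∩ B).Nonempty := by
    have := isPreconnected_closed_iff.1 hYc.2.isPreconnected A B hAc hBc hAB.ge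
    obtain ⟨a, ha⟩ := hA.nonempty
    obtain ⟨b, hb⟩ := hB.nonempty
    obtain ⟨w, -, hw⟩ := this ⟨a, hAY ha, ha⟩ ⟨b, hBY hb, hb⟩
    exact ⟨w, hw⟩
  refine ⟨hne, ?_⟩
  have hA' := hAY.trans hY
  have hB' := hBY.trans hY
  by_cases h0 : (0 : ℝ × ℝ) ∈ A ∩ B
  · exact preconn_of_star fun z hz s hs => ⟨FanSet.star hP hA' hAc hA.isPreconnected h0.1 z hz.1 s hs,
      FanSet.star hP hB' hBc hB.isPreconnected h0.2 z hz.2 s hs⟩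
  · have hray : ∀ x ∈ A ∩ B, ∀ y ∈ A ∩ B, x.1 * y.2 = x.2 * y.1 := by
      intro x hx y hy
      by_cases hA0 : (0 : ℝ × ℝ) ∈ A
      · exact FanSet.ray hP hB' hB.isPreconnected (fun h => h0 ⟨hA0, h⟩) _ hx.2 _ hy.2
      · exact FanSet.ray hP hA' hA.isPreconnected hA0 _ hx.1 _ hy.1
    have hconn : ∀ (c a b : ℝ), 0 ≤ a → a ≤ b → (a, a * c) ∈ A ∩ B → (b, b * c) ∈ A ∩ B → 
        ∃ t, t ⊆ A ∩ B ∧ (a, a * c) ∈ t ∧ (b, b * c) ∈ t ∧ IsPreconnected t := by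
      intro c a b ha hab hx hy
      refine ⟨(fun u : ℝ => (u, u * c)) '' Icc a b, ?_, ⟨a, ⟨le_rfl, hab⟩, rfl⟩, ⟨b, ⟨hab, le_rfl⟩, rfl⟩, 
        isPreconnected_Icc.image _ (by fun_prop)⟩
      rintro _ ⟨u, hu, rfl⟩
      exact ⟨FanSet.seg hP hA' hAc hA.isPreconnected ha hu.1 hu.2 hx.1 hy.1, FanSet.seg hP hB' hBc hB.isPreconnected ha hu.1 hu.2 hx.2 hy.2⟩
    refine isPreconnected_of_forall_pair fun x hx y hy => ?_
    obtain ⟨c, hc, a, ha, b, hb, rfl, rfl⟩ := FanSet.collinear (hA' hx.1) (hA' hy.1) (hray x hx y hy)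
    rcases le_total a b with h | h
    · exact hconn c a b ha.1 h hx hy
    · obtain ⟨t, h1, h2, h3, h4⟩ := hconn c b a hb.1 h hy hx
      exact ⟨t, h1, h3, h2, h4⟩

theorem FanSet.dendroid (hc : IsCompact P) (hne : P.Nonempty) (hP : Gappy P) : IsDendroid (FanSet P) :=
  ⟨⟨FanSet.compact hc, ⟨0, FanSet.zero_mem hne⟩, preconn_of_star fun _ hz _ hs => FanSet.smul_mem hz hs⟩, FanSet.arcs, FanSet.hu hP⟩

theorem IsDendroid.transport {X : Type*} [TopologicalSpace X] [T2Space X] {F Q : Set X} (hF : IsDendroid F) 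
    (hQ : IsCompact Q) {g : X → X} (hg : ContinuousOn g Q) (hb : BijOn g Q F) : IsDendroid Q := by
  obtain ⟨k, hk⟩ : ∃ k : X → X, InvOn k g Q F ∧ MapsTo k F Q := by
    obtain ⟨z, hz⟩ := hF.1.2.nonempty
    have : Nonempty X := ⟨z⟩
    exact ⟨Function.invFunOn g Q, hb.invOn_invFunOn, hb.surjOn.mapsTo_invFunOn⟩
  obtain ⟨hki, hkm⟩ := hk
  have hkc : ContinuousOn k F := by
    rw [continuousOn_iff_isClosed]
    intro C hC
    refine ⟨g '' (C ∩ Q), ((hQ.inter_left hC).image_of_continuousOn (hg.mono inter_subset_right)).isClosed, ?_⟩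
    ext z; constructor
    · rintro ⟨h1, h2⟩
      exact ⟨⟨k z, ⟨h1, hkm h2⟩, hki.2 h2⟩, h2⟩
    · rintro ⟨⟨w, ⟨h1, h1'⟩, rfl⟩, h2⟩
      refine ⟨?_, h2⟩
      rw [mem_preimage, hki.1 h1']; exact h1
  have himg : ∀ S ⊆ Q, k '' (g '' S) = S := fun S hS => by
    ext z; constructor
    · rintro ⟨_, ⟨w, hw, rfl⟩, rfl⟩
      rwa [hki.1 (hS hw)]
    · intro hz
      exact ⟨_, ⟨z, hz, rfl⟩, hki.1 (hS hz)⟩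
  have hsub : ∀ S ⊆ Q, g '' S ⊆ F := fun S hS => by
    rintro _ ⟨w, hw, rfl⟩; exact hb.mapsTo (hS hw)
  refine ⟨⟨hQ, ?_⟩, ?_, ?_⟩
  · rw [← himg Q le_rfl, hb.image_eq]
    exact hF.1.2.image _ hkc
  · intro x hx y hy hxy
    obtain ⟨A, hAF, f, hf, hfi, hfr, hf0, hf1⟩ := hF.2.1 _ (hb.mapsTo hx) _ (hb.mapsTo hy) (fun h => hxy (hb.injOn hx hy h))
    have hfF : ∀ t, f t ∈ F := fun t => hAF (hfr ▸ mem_range_self t)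
    refine ⟨range (k ∘ f), ?_, k ∘ f, ?_, ?_, rfl, ?_, ?_⟩
    · rintro _ ⟨t, rfl⟩
      exact hkm (hfF t)
    · exact hkc.comp_continuous hf hfF
    · intro s t h
      exact hfi (hki.2.injOn (hfF s) (hfF t) h)
    · change k (f _) = x; rw [hf0, hki.1 hx]
    · change k (f _) = y; rw [hf1, hki.1 hy]
  · intro Y hY hYc A B hAY hBY hAc hBc hA hB hAB
    have cl : ∀ S ⊆ Y, IsClosed S → IsClosed (g '' S) := fun S hS hcl =>
      ((hYc.1.of_isClosed_subset hcl hS).image_of_continuousOn (hg.mono (hS.trans hY))).isClosed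
    have := hF.2.2 (g '' Y) (hsub Y hY) ⟨hYc.1.image_of_continuousOn (hg.mono hY), hYc.2.image _ (hg.mono hY)⟩ (g '' A) (g '' B)
      (image_mono hAY) (image_mono hBY) (cl A hAY hAc) (cl B hBY hBc) (hA.image _ (hg.mono (hAY.trans hY)))
      (hB.image _ (hg.mono (hBY.trans hY))) (by rw [← image_union, hAB])
    rw [← (hb.injOn.mono hY).image_inter hAY hBY] at this
    rw [← himg (A ∩ B) (inter_subset_left.trans (hAY.trans hY))]
    exact this.image _ (hkc.mono (hsub _ (inter_subset_left.trans (hAY.trans hY))))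
end FanTop

section Push
open Set

section PushDefs
variable {K : Type*} [Field K] [LinearOrder K]

/-- displacement of the point push -/
def wf (κ ρ ν : K) (x v : K) : K :=
  max 0 (min (x + κ * (ρ - x)) (min (2 * ρ - x) (ρ - ν * max v (-v))))

/-- the displacement, taking into account whether the push is active -/
def wact (b : Bool) (κ ρ ν c : K) (z : K × K) : K := cond b (wf κ ρ ν z.1 (z.2 - c * z.1)) 0

/-- the point push -/
def Nmap (b : Bool) (κ ρ ν c : K) (z : K × K) : K × K :=
  (z.1 - wact b κ ρ ν c z, z.2 - c * wact b κ ρ ν c z)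

/-- defining functions of approximate cones -/
def kf (qc rr : ℕ → K) (s : ℕ) (z : K × K) : K :=
  Nat.rec (motive := fun _ => K) (max (z.1 - 1) (max (-z.2) (z.2 - z.1)))
    (fun j k => max k (rr j * z.1 - max (z.2 - qc j * z.1) (-(z.2 - qc j * z.1)))) s

/-- sup norm of a pair -/
def nrm (z : K × K) : K := max (max z.1 (-z.1)) (max z.2 (-z.2))

/-- defining function of the stage `s` neighborhood -/
def hfun (κ : K) (qc rr : ℕ → K) (s : ℕ) (z : K × K) : K := min (nrm z - 2 * κ) (kf qc rr s z)
end PushDefs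

theorem nrm_eq (z : ℝ × ℝ) : nrm z = ‖z‖ := rfl

theorem wf_nonneg (κ ρ ν x v : ℝ) : 0 ≤ wf κ ρ ν x v := le_max_left _ _

theorem wf_pos {κ ρ ν x v : ℝ} (h : 0 < wf κ ρ ν x v) :
    0 < x + κ * (ρ - x) ∧ 0 < 2 * ρ - x ∧ 0 < ρ - ν * |v| := by
  rcases lt_max_iff.1 h with h | h
  · exact absurd h (lt_irrefl 0)
  · exact ⟨(lt_min_iff.1 h).1, (lt_min_iff.1 (lt_min_iff.1 h).2).1, (lt_min_iff.1 (lt_min_iff.1 h).2).2⟩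

theorem wf_le {κ ρ ν x v : ℝ} (hν : 0 ≤ ν) (hρ : 0 ≤ ρ) : wf κ ρ ν x v ≤ ρ := by
  refine max_le hρ ((min_le_right _ _).trans ((min_le_right _ _).trans ?_))
  have : 0 ≤ ν * max v (-v) := mul_nonneg hν (abs_nonneg v)
  linarith

/-- comparison principle -/
theorem wf_comp {κ ρ ν x v x' v' d : ℝ} (hd : 0 ≤ d) (h1 : x + κ * (ρ - x) ≤ x' + κ * (ρ - x') + d)
    (h2 : 2 * ρ - x ≤ 2 * ρ - x' + d) (h3 : ρ - ν * |v| ≤ ρ - ν * |v'| + d) :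
    wf κ ρ ν x v ≤ wf κ ρ ν x' v' + d := by
  unfold wf
  rw [← max_add_add_right, ← min_add_add_right, ← min_add_add_right]
  refine max_le_max (by linarith) (min_le_min h1 (min_le_min h2 h3))

theorem wf_mono {κ ρ ν x x' v : ℝ} (_hκ : 0 ≤ κ) (hκ1 : κ ≤ 1) (hx : x' ≤ x) :
    wf κ ρ ν x v ≤ wf κ ρ ν x' v + (1 - κ) * (x - x') := by
  have : 0 ≤ (1 - κ) * (x - x') := mul_nonneg (by linarith) (by linarith)
  exact wf_comp this (by linarith) (by linarith) (by linarith)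

theorem wf_lip {κ ρ ν x x' v v' : ℝ} (_hκ : 0 ≤ κ) (hκ1 : κ ≤ 1) (hν : 0 ≤ ν) :
    wf κ ρ ν x v ≤ wf κ ρ ν x' v' + max |x - x'| (ν * |v - v'|) := by
  have e1 : |x - x'| ≤ max |x - x'| (ν * |v - v'|) := le_max_left _ _
  have e2 : ν * |v - v'| ≤ max |x - x'| (ν * |v - v'|) := le_max_right _ _
  have e3 := abs_le.1 (le_refl |x - x'|)
  have e4 : |v'| - |v| ≤ |v - v'| := by rw [abs_sub_comm]; exact abs_sub_abs_le_abs_sub _ _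
  have e5 : (1 - κ) * (x - x') ≤ |x - x'| := by
    calc (1 - κ) * (x - x') ≤ (1 - κ) * |x - x'| := mul_le_mul_of_nonneg_left e3.2 (by linarith)
      _ ≤ 1 * |x - x'| := mul_le_mul_of_nonneg_right (by linarith) (abs_nonneg _)
      _ = _ := one_mul _
  refine wf_comp ((abs_nonneg _).trans e1) (by linarith) (by linarith) ?_
  have := mul_le_mul_of_nonneg_left e4 hν
  linarith

theorem norm_le_iff (z : ℝ × ℝ) (r : ℝ) : ‖z‖ ≤ r ↔ |z.1| ≤ r ∧ |z.2| ≤ r := by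
  rw [Prod.norm_def, max_le_iff]; rfl

theorem norm_comp_le (z : ℝ × ℝ) : |z.1| ≤ ‖z‖ ∧ |z.2| ≤ ‖z‖ := (norm_le_iff z _).1 le_rfl

section NN
variable {b : Bool} {κ ρ ν c : ℝ}

theorem wact_nonneg (z : ℝ × ℝ) : 0 ≤ wact b κ ρ ν c z := by
  cases b
  · exact le_rfl
  · exact wf_nonneg _ _ _ _ _

theorem Nmap_fix {z : ℝ × ℝ} (h : ¬ 0 < wact b κ ρ ν c z) : Nmap b κ ρ ν c z = z := by
  have : wact b κ ρ ν c z = 0 := le_antisymm (not_lt.1 h) (wact_nonneg z)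
  simp [Nmap, this]

theorem Nmap_upper (hκ : 0 ≤ κ) (hκ1 : κ ≤ 1) (hν : 1 ≤ ν) (hc0 : 0 ≤ c) (hc1 : c ≤ 1) (z z' : ℝ × ℝ) :
    ‖Nmap b κ ρ ν c z - Nmap b κ ρ ν c z'‖ ≤ 4 * ν * ‖z - z'‖ := by
  obtain ⟨e1, e2⟩ := norm_comp_le (z - z')
  set D := ‖z - z'‖
  have hD : 0 ≤ D := norm_nonneg _
  simp only [Prod.fst_sub, Prod.snd_sub] at e1 e2
  have hDn : D ≤ ν * D := le_mul_of_one_le_left hD hν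
  have hw : ∀ z z' : ℝ × ℝ, |z.1 - z'.1| ≤ D → |z.2 - z'.2| ≤ D → wact b κ ρ ν c z - wact b κ ρ ν c z' ≤ 2 * ν * D := by
    intro z z' e1 e2
    cases b
    · simp only [wact, cond_false, sub_zero]; linarith
    · have h1 := wf_lip (κ := κ) (ρ := ρ) (ν := ν) (x := z.1) (x' := z'.1) (v := z.2 - c * z.1) (v' := z'.2 - c * z'.1) hκ hκ1 (by linarith)
      have h2 : |z.2 - c * z.1 - (z'.2 - c * z'.1)| ≤ 2 * D := by
        have : z.2 - c * z.1 - (z'.2 - c * z'.1) = (z.2 - z'.2) - c * (z.1 - z'.1) := by ring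
        rw [this]
        refine (abs_sub _ _).trans ?_
        rw [abs_mul, abs_of_nonneg hc0]
        have := mul_le_mul hc1 e1 (abs_nonneg _) zero_le_one
        linarith
      have h3 : ν * |z.2 - c * z.1 - (z'.2 - c * z'.1)| ≤ ν * (2 * D) := mul_le_mul_of_nonneg_left h2 (by linarith)
      have h4 : max |z.1 - z'.1| (ν * |z.2 - c * z.1 - (z'.2 - c * z'.1)|) ≤ 2 * ν * D := max_le (by linarith) (by linarith)
      simp only [wact, cond_true]
      linarith
  have hwa : |wact b κ ρ ν c z - wact b κ ρ ν c z'| ≤ 2 * ν * D := by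
    rw [abs_le]
    have := hw z' z (by rwa [abs_sub_comm]) (by rwa [abs_sub_comm])
    exact ⟨by linarith, hw z z' e1 e2⟩
  rw [norm_le_iff]
  simp only [Nmap, Prod.fst_sub, Prod.snd_sub]
  constructor
  · rw [show z.1 - wact b κ ρ ν c z - (z'.1 - wact b κ ρ ν c z') = (z.1 - z'.1) - (wact b κ ρ ν c z - wact b κ ρ ν c z') by ring]
    refine (abs_sub _ _).trans ?_
    linarith
  · rw [show z.2 - c * wact b κ ρ ν c z - (z'.2 - c * wact b κ ρ ν c z') = (z.2 - z'.2) - c * (wact b κ ρ ν c z - wact b κ ρ ν c z') by ring]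
    refine (abs_sub _ _).trans ?_
    rw [abs_mul, abs_of_nonneg hc0]
    have := mul_le_mul hc1 hwa (abs_nonneg _) zero_le_one
    linarith

theorem Nmap_lower (hκ : 0 < κ) (hκ1 : κ ≤ 1) (hν : 1 ≤ ν) (hc0 : 0 ≤ c) (hc1 : c ≤ 1) (z z' : ℝ × ℝ) :
    ‖z - z'‖ ≤ 8 * ν / κ * ‖Nmap b κ ρ ν c z - Nmap b κ ρ ν c z'‖ := by
  obtain ⟨e1, e2⟩ := norm_comp_le (Nmap b κ ρ ν c z - Nmap b κ ρ ν c z')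
  set D := ‖Nmap b κ ρ ν c z - Nmap b κ ρ ν c z'‖
  have hD : 0 ≤ D := norm_nonneg _
  simp only [Prod.fst_sub, Prod.snd_sub, Nmap] at e1 e2
  have hν0 : 0 < ν := by linarith
  have hDn : D ≤ ν * D := le_mul_of_one_le_left hD hν
  have hdv : |z.2 - c * z.1 - (z'.2 - c * z'.1)| ≤ 2 * D := by
    set X := z.1 - wact b κ ρ ν c z - (z'.1 - wact b κ ρ ν c z')
    set Y := z.2 - c * wact b κ ρ ν c z - (z'.2 - c * wact b κ ρ ν c z')
    have : z.2 - c * z.1 - (z'.2 - c * z'.1) = Y - c * X := by simp only [X, Y]; ring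
    rw [this]
    refine (abs_sub _ _).trans ?_
    rw [abs_mul, abs_of_nonneg hc0]
    have := mul_le_mul hc1 e1 (abs_nonneg _) zero_le_one
    linarith
  have main : ∀ z z' : ℝ × ℝ, z'.1 ≤ z.1 → |z.2 - c * z.1 - (z'.2 - c * z'.1)| ≤ 2 * D → 
      z.1 - wact b κ ρ ν c z - (z'.1 - wact b κ ρ ν c z') ≤ D → κ * (z.1 - z'.1) ≤ 3 * (ν * D) := by
    intro z z' hz hdv e1
    cases b
    · simp only [wact, cond_false, sub_zero] at e1
      have : κ * (z.1 - z'.1) ≤ 1 * (z.1 - z'.1) := mul_le_mul_of_nonneg_right hκ1 (by linarith)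
      linarith
    · simp only [wact, cond_true] at e1
      have h1 := wf_mono (κ := κ) (ρ := ρ) (ν := ν) (v := z.2 - c * z.1) hκ.le hκ1 hz
      have h2 := wf_lip (κ := κ) (ρ := ρ) (ν := ν) (x := z'.1) (x' := z'.1) (v := z.2 - c * z.1) (v' := z'.2 - c * z'.1) hκ.le hκ1 hν0.le
      have h3 : ν * |z.2 - c * z.1 - (z'.2 - c * z'.1)| ≤ ν * (2 * D) := mul_le_mul_of_nonneg_left hdv hν0.le
      rw [sub_self, abs_zero, max_eq_right (mul_nonneg hν0.le (abs_nonneg _))] at h2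
      nlinarith
  have hx : κ * |z.1 - z'.1| ≤ 3 * (ν * D) := by
    rcases le_total z'.1 z.1 with h | h
    · rw [abs_of_nonneg (by linarith)]
      exact main z z' h hdv (abs_le.1 e1).2
    · rw [abs_of_nonpos (by linarith)]
      have := main z' z h (by rwa [abs_sub_comm]) (by linarith [(abs_le.1 e1).1])
      linarith
  have hx' : |z.1 - z'.1| ≤ 3 * (ν * D / κ) := by
    have : |z.1 - z'.1| ≤ 3 * (ν * D) / κ := by
      rw [le_div_iff₀ hκ]; linarith
    rwa [mul_div_assoc] at this
  have hB : ν * D ≤ ν * D / κ := by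
    rw [le_div_iff₀ hκ]
    exact mul_le_of_le_one_right (mul_nonneg hν0.le hD) hκ1
  have heq : 8 * ν / κ * D = 8 * (ν * D / κ) := by ring
  have hB0 : 0 ≤ ν * D / κ := by positivity
  rw [heq, norm_le_iff]
  simp only [Prod.fst_sub, Prod.snd_sub]
  refine ⟨by linarith, ?_⟩
  rw [show z.2 - z'.2 = (z.2 - c * z.1 - (z'.2 - c * z'.1)) + c * (z.1 - z'.1) by ring]
  refine (abs_add_le _ _).trans ?_
  rw [abs_mul, abs_of_nonneg hc0]
  have := mul_le_mul hc1 hx' (abs_nonneg _) zero_le_one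
  linarith

theorem Nmap_inj (hκ : 0 < κ) (hκ1 : κ ≤ 1) (hν : 1 ≤ ν) (hc0 : 0 ≤ c) (hc1 : c ≤ 1) : 
    Function.Injective (Nmap b κ ρ ν c) := by
  intro z z' h
  have := Nmap_lower (b := b) (ρ := ρ) hκ hκ1 hν hc0 hc1 z z'
  rw [h, sub_self, norm_zero, mul_zero] at this
  exact sub_eq_zero.1 (norm_le_zero_iff.1 this)

theorem Nmap_continuous (hκ : 0 ≤ κ) (hκ1 : κ ≤ 1) (hν : 1 ≤ ν) (hc0 : 0 ≤ c) (hc1 : c ≤ 1) : 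
    Continuous (Nmap b κ ρ ν c) := by
  have : LipschitzWith (Real.toNNReal (4 * ν)) (Nmap b κ ρ ν c) := by
    refine LipschitzWith.of_dist_le_mul fun z z' => ?_
    rw [dist_eq_norm, dist_eq_norm, Real.coe_toNNReal _ (by linarith)]
    exact Nmap_upper hκ hκ1 hν hc0 hc1 z z'
  exact this.continuous

theorem Nmap_surj (hρ : 0 ≤ ρ) (hν : 0 ≤ ν) : Function.Surjective (Nmap b κ ρ ν c) := by
  cases b
  · intro z; exact ⟨z, by simp [Nmap, wact]⟩
  · rintro ⟨a, y⟩
    set v := y - c * a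
    have hcont : Continuous (fun x => x - wf κ ρ ν x v) := by
      unfold wf; fun_prop
    have h1 : a - wf κ ρ ν a v ≤ a := by linarith [wf_nonneg κ ρ ν a v]
    have h2 : a ≤ (a + ρ) - wf κ ρ ν (a + ρ) v := by linarith [wf_le (κ := κ) (x := a + ρ) (v := v) hν hρ]
    obtain ⟨x, -, hx⟩ := intermediate_value_Icc (show a ≤ a + ρ by linarith) hcont.continuousOn ⟨h1, h2⟩
    simp only at hx
    refine ⟨(x, v + c * x), ?_⟩
    have : v + c * x - c * x = v := by ring
    simp only [Nmap, wact, cond_true, this]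
    refine Prod.ext hx ?_
    simp only
    rw [show v + c * x - c * wf κ ρ ν x v = v + c * (x - wf κ ρ ν x v) by ring, hx]
    simp only [v]; ring

/-- sets containing the support are invariant in both directions -/
theorem Nmap_mem_iff (hinj : Function.Injective (Nmap b κ ρ ν c)) {S : ℝ × ℝ → Prop} (hS : ∀ z, 0 < wact b κ ρ ν c z → S z) (z : ℝ × ℝ) :
    S (Nmap b κ ρ ν c z) ↔ S z := by
  constructor
  · intro h
    by_contra hn
    have : Nmap b κ ρ ν c z = z := Nmap_fix fun h' => hn (hS z h')
    exact hn (this ▸ h)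
  · intro h
    by_contra hn
    have h1 : Nmap b κ ρ ν c (Nmap b κ ρ ν c z) = Nmap b κ ρ ν c z := Nmap_fix fun h' => hn (hS _ h')
    have h2 := hinj h1
    rw [h2] at hn
    exact hn h

theorem Nmap_center (hρ : 0 ≤ ρ) : Nmap true κ ρ ν c (ρ, c * ρ) = 0 := by
  have : wf κ ρ ν ρ (c * ρ - c * ρ) = ρ := by
    simp only [wf, sub_self, neg_zero, max_self, mul_zero, add_zero, sub_zero]
    rw [show 2 * ρ - ρ = ρ by ring, min_self, min_self, max_eq_right hρ]
  simp only [Nmap, wact, cond_true]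
  rw [this, sub_self, sub_self]
  rfl

theorem wact_supp_norm (hρ : 0 < ρ) (hκ : 0 < κ) (hκ1 : κ ≤ 1/2) (hν : 1 ≤ ν) (hc0 : 0 ≤ c) (hc1 : c ≤ 1) {z : ℝ × ℝ} (h : 0 < wact b κ ρ ν c z) :
    ‖z‖ ≤ 4 * ρ ∧ - (2 * κ * ρ) ≤ z.1 ∧ z.1 < 2 * ρ ∧ ν * |z.2 - c * z.1| < ρ := by
  cases b
  · exact absurd h (lt_irrefl 0)
  obtain ⟨h1, h2, h3⟩ := wf_pos h
  have hv : |z.2 - c * z.1| ≤ ν * |z.2 - c * z.1| := le_mul_of_one_le_left (abs_nonneg _) hν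
  have hx1 : - (2 * κ * ρ) ≤ z.1 := by
    by_contra hn
    push Not at hn
    have hκρ : 0 < κ * ρ := mul_pos hκ hρ
    nlinarith
  have hκρ : κ * ρ ≤ 1/2 * ρ := mul_le_mul_of_nonneg_right hκ1 hρ.le
  have hx : |z.1| ≤ 2 * ρ := abs_le.2 ⟨by linarith, by linarith⟩
  refine ⟨(norm_le_iff _ _).2 ⟨by linarith, ?_⟩, hx1, by linarith, by linarith⟩
  rw [show z.2 = (z.2 - c * z.1) + c * z.1 by ring]
  refine (abs_add_le _ _).trans ?_
  rw [abs_mul, abs_of_nonneg hc0]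
  have := mul_le_mul hc1 hx (abs_nonneg _) zero_le_one
  linarith

end NN

theorem kf_zero (qc rr : ℕ → ℝ) (z : ℝ × ℝ) : kf qc rr 0 z = max (z.1 - 1) (max (-z.2) (z.2 - z.1)) := rfl
theorem kf_succ (qc rr : ℕ → ℝ) (s : ℕ) (z : ℝ × ℝ) : kf qc rr (s + 1) z = max (kf qc rr s z) (rr s * z.1 - |z.2 - qc s * z.1|) := rfl

theorem kf_le_zero_iff (qc rr : ℕ → ℝ) (s : ℕ) (z : ℝ × ℝ) :
    kf qc rr s z ≤ 0 ↔ (z.1 ≤ 1 ∧ 0 ≤ z.2 ∧ z.2 ≤ z.1) ∧ ∀ j < s, rr j * z.1 ≤ |z.2 - qc j * z.1| := by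
  induction s with
  | zero =>
    rw [kf_zero]
    simp [max_le_iff]
  | succ s ih =>
    rw [kf_succ, max_le_iff, ih]
    constructor
    · rintro ⟨⟨h1, h2⟩, h3⟩
      refine ⟨h1, fun j hj => ?_⟩
      rcases Nat.lt_succ_iff_lt_or_eq.1 hj with h | rfl
      · exact h2 j h
      · linarith
    · rintro ⟨h1, h2⟩
      exact ⟨⟨h1, fun j hj => h2 j (by omega)⟩, by linarith [h2 s (by omega)]⟩

theorem kf_mono (qc rr : ℕ → ℝ) (z : ℝ × ℝ) : Monotone (fun s => kf qc rr s z) :=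
  monotone_nat_of_le_succ fun s => by simp only [kf_succ]; exact le_max_left _ _

theorem kf_lip (qc rr : ℕ → ℝ) (hq : ∀ j, 0 ≤ qc j ∧ qc j ≤ 1) (hr : ∀ j, 0 ≤ rr j ∧ rr j ≤ 1) (s : ℕ) (z z' : ℝ × ℝ) :
    kf qc rr s z ≤ kf qc rr s z' + 3 * ‖z - z'‖ := by
  obtain ⟨e1, e2⟩ := norm_comp_le (z - z')
  set D := ‖z - z'‖
  simp only [Prod.fst_sub, Prod.snd_sub] at e1 e2
  have f1 := abs_le.1 e1
  have f2 := abs_le.1 e2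
  induction s with
  | zero =>
    rw [kf_zero, kf_zero, ← max_add_add_right, ← max_add_add_right]
    exact max_le_max (by linarith) (max_le_max (by linarith) (by linarith))
  | succ s ih =>
    rw [kf_succ, kf_succ, ← max_add_add_right]
    refine max_le_max ih ?_
    have g1 : rr s * z.1 - rr s * z'.1 ≤ D := by
      rw [← mul_sub]
      have : rr s * (z.1 - z'.1) ≤ rr s * D := mul_le_mul_of_nonneg_left f1.2 (hr s).1
      have := mul_le_mul_of_nonneg_right (hr s).2 (show 0 ≤ D from norm_nonneg _)
      linarith
    have g2 : |z'.2 - qc s * z'.1| - |z.2 - qc s * z.1| ≤ 2 * D := by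
      refine (abs_sub_abs_le_abs_sub _ _).trans ?_
      rw [show z'.2 - qc s * z'.1 - (z.2 - qc s * z.1) = qc s * (z.1 - z'.1) - (z.2 - z'.2) by ring]
      refine (abs_sub _ _).trans ?_
      rw [abs_mul, abs_of_nonneg (hq s).1]
      have := mul_le_mul (hq s).2 e1 (abs_nonneg _) zero_le_one
      linarith
    linarith

theorem hfun_lip (κ : ℝ) (qc rr : ℕ → ℝ) (hq : ∀ j, 0 ≤ qc j ∧ qc j ≤ 1) (hr : ∀ j, 0 ≤ rr j ∧ rr j ≤ 1) (s : ℕ) (z z' : ℝ × ℝ) :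
    hfun κ qc rr s z ≤ hfun κ qc rr s z' + 3 * ‖z - z'‖ := by
  unfold hfun
  rw [← min_add_add_right]
  refine min_le_min ?_ (kf_lip qc rr hq hr s z z')
  rw [nrm_eq, nrm_eq]
  have := norm_le_norm_add_norm_sub' z z'
  have := norm_nonneg (z - z')
  linarith

end Push

section Dyn
open Set

/-- `2^{-n}` as a real -/
noncomputable def hr (n : ℕ) : ℝ := ((hp n : ℚ) : ℝ)
theorem hr_eq (n : ℕ) : hr n = (1/2)^n := by simp [hr, hp]
theorem hr_pos (n : ℕ) : 0 < hr n := by rw [hr_eq]; positivity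
theorem hr_anti {m n : ℕ} (h : m ≤ n) : hr n ≤ hr m := by
  rw [hr_eq, hr_eq]; exact pow_le_pow_of_le_one (by norm_num) (by norm_num) h
theorem hr_lt {m n : ℕ} (h : m < n) : hr n < hr m := by
  rw [hr_eq, hr_eq]; exact pow_lt_pow_right_of_lt_one₀ (by norm_num) (by norm_num) h
theorem hr_add (m n : ℕ) : hr (m + n) = hr m * hr n := by simp only [hr_eq, pow_add]
theorem hr_le_one (n : ℕ) : hr n ≤ 1 := by
  have := hr_anti (Nat.zero_le n); rwa [hr_eq 0, pow_zero] at this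
theorem hr_two (n : ℕ) : hr n * 2 ^ n = 1 := by rw [hr_eq, ← mul_pow]; norm_num
theorem hr_two' (n : ℕ) : 2 ^ n * hr n = 1 := by rw [mul_comm, hr_two]
theorem hr_small {ε : ℝ} (hε : 0 < ε) : ∃ n, hr n < ε := by
  obtain ⟨n, hn⟩ := exists_pow_lt_of_lt_one hε (show (1/2:ℝ) < 1 by norm_num)
  exact ⟨n, by rwa [hr_eq]⟩

/-- The data of the construction. -/
structure Dat where
  qc : ℕ → ℚ
  rr : ℕ → ℚ
  c : ℕ → ℚ
  M : ℕ → ℕ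
  act : ℕ → Bool
  hqc : ∀ j, 0 ≤ qc j ∧ qc j ≤ 1
  hrr : ∀ j, 0 ≤ rr j ∧ rr j ≤ 1
  hc1 : ∀ s, hp (M s) ≤ c s
  hc2 : ∀ s, c s + hp (M s) ≤ 1
  hc3 : ∀ s j, j < s → rr j + hp (M s) ≤ |c s - qc j|
  hact : ∀ s t, act s = true → act t = true → s.unpair.1 = t.unpair.1 → s = t

namespace Dat
variable (D : Dat)

/-- number acting at stage `s` -/
def num (s : ℕ) : ℕ := s.unpair.1
theorem num_le (s : ℕ) : num s ≤ s := Nat.unpair_left_le s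

/-- last stage at which a number less than `m` acted -/
def tau (D : Dat) (s m : ℕ) : ℕ :=
  Nat.rec (motive := fun _ => ℕ) 0 (fun s t => cond (D.act s && decide (num s < m)) (s + 1) t) s

/-- exponents of the Lipschitz constants -/
def F (D : Dat) (s : ℕ) : ℕ :=
  Nat.rec (motive := fun _ => ℕ) 0 (fun s f => 3 * (f + 3 * s + 3) + D.M s + 3) s
/-- exponent of `κ` -/
def E (s : ℕ) : ℕ := D.F s + 3 * s + 3
/-- exponent of `δ` -/
def dl (s m : ℕ) : ℕ := D.F (D.tau s m) + 3 * m

/-- the push at stage `s` -/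
noncomputable def Nr (s : ℕ) : ℝ × ℝ → ℝ × ℝ :=
  Nmap (D.act s) (hr (D.E s)) (hr (D.dl s (num s) + 2)) (2 ^ (D.E s + D.M s)) (D.c s : ℝ)

/-- composition of the pushes before stage `s` -/
noncomputable def G (s : ℕ) (z : ℝ × ℝ) : ℝ × ℝ :=
  Nat.rec (motive := fun _ => ℝ × ℝ) z (fun s z => D.Nr s z) s

/-- the defining function of the stage `s` neighborhood -/
noncomputable def H (s : ℕ) (z : ℝ × ℝ) : ℝ := hfun (hr (D.E s)) (fun j => (D.qc j : ℝ)) (fun j => (D.rr j : ℝ)) s z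

/-- the dendroid -/
def Q : Set (ℝ × ℝ) := {x | ∀ s, D.H s (D.G s x) ≤ 0}
/-- the set of slopes -/
def P : Set ℝ := {c | (0 ≤ c ∧ c ≤ 1) ∧ ∀ j, (D.rr j : ℝ) ≤ |c - D.qc j|}

theorem mem_Q {x : ℝ × ℝ} : x ∈ D.Q ↔ ∀ s, D.H s (D.G s x) ≤ 0 := Iff.rfl
theorem mem_P {c : ℝ} : c ∈ D.P ↔ (0 ≤ c ∧ c ≤ 1) ∧ ∀ j, (D.rr j : ℝ) ≤ |c - D.qc j| := Iff.rfl

theorem G_zero (z : ℝ × ℝ) : D.G 0 z = z := rfl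
theorem G_succ (s : ℕ) (z : ℝ × ℝ) : D.G (s + 1) z = D.Nr s (D.G s z) := rfl
theorem tau_zero (m : ℕ) : D.tau 0 m = 0 := rfl
theorem tau_succ (s m : ℕ) : D.tau (s + 1) m = cond (D.act s && decide (num s < m)) (s + 1) (D.tau s m) := rfl
theorem F_succ (s : ℕ) : D.F (s + 1) = 3 * D.E s + D.M s + 3 := rfl

theorem tau_succ_pos {s m : ℕ} (h : D.act s = true) (h' : num s < m) : D.tau (s + 1) m = s + 1 := by
  rw [tau_succ, h]; simp [h']
theorem tau_succ_neg {s m : ℕ} (h : D.act s = true → m ≤ num s) : D.tau (s + 1) m = D.tau s m := by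
  rw [tau_succ]
  cases ha : D.act s
  · simp
  · have := h ha
    simp [not_lt.2 this]

theorem tau_le (s m : ℕ) : D.tau s m ≤ s := by
  induction s with
  | zero => simp [tau_zero]
  | succ s ih =>
    rw [tau_succ]
    cases (D.act s && decide (num s < m)) <;> simp <;> omega

theorem tau_mono (s : ℕ) {m n : ℕ} (h : m ≤ n) : D.tau s m ≤ D.tau s n := by
  induction s with
  | zero => simp [tau_zero]
  | succ s ih =>
    by_cases hn : D.act s = true → n ≤ num s
    · rw [D.tau_succ_neg hn, D.tau_succ_neg fun h' => h.trans (hn h')]; exact ih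
    · push Not at hn
      rw [D.tau_succ_pos hn.1 hn.2]
      exact D.tau_le _ _

theorem F_mono : Monotone D.F := monotone_nat_of_le_succ fun s => by rw [F_succ, E]; omega
theorem E_mono : Monotone D.E := fun s t h => by
  have := D.F_mono h
  unfold E; omega
theorem E_ge (s : ℕ) : s ≤ D.E s := by unfold E; omega

theorem dl_mono (s : ℕ) {m n : ℕ} (h : m ≤ n) : D.dl s m ≤ D.dl s n := by
  have := D.F_mono (D.tau_mono s h)
  unfold dl; omega
theorem dl_succ (s m : ℕ) : D.dl s m + 3 ≤ D.dl s (m + 1) := by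
  have := D.F_mono (D.tau_mono s (Nat.le_succ m))
  simp only [dl, Nat.succ_eq_add_one] at *; omega
theorem dl_num (s : ℕ) : D.dl s (num s) + 3 ≤ D.E s := by
  have h1 := D.F_mono (D.tau_le s (num s))
  have h2 := num_le s
  unfold dl E; omega

theorem hcpos (s : ℕ) : 0 ≤ (D.c s : ℝ) ∧ (D.c s : ℝ) ≤ 1 := by
  have h0 : (0:ℚ) < hp (D.M s) := by simp [hp]
  have h1 := D.hc1 s
  have h2 := D.hc2 s
  constructor
  · exact_mod_cast (by linarith : (0:ℚ) ≤ D.c s)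
  · exact_mod_cast (by linarith : D.c s ≤ (1:ℚ))

theorem one_le_two (n : ℕ) : (1:ℝ) ≤ 2 ^ n := one_le_pow₀ (by norm_num)

theorem E_half (s : ℕ) : hr (D.E s) ≤ 1/2 := by
  have := hr_anti (show 1 ≤ D.E s by unfold E; omega)
  rwa [hr_eq 1, pow_one] at this

theorem Nr_inj (s : ℕ) : Function.Injective (D.Nr s) :=
  Nmap_inj (hr_pos _) (hr_le_one _) (one_le_two _) (D.hcpos s).1 (D.hcpos s).2
theorem Nr_cont (s : ℕ) : Continuous (D.Nr s) :=
  Nmap_continuous (hr_pos _).le (hr_le_one _) (one_le_two _) (D.hcpos s).1 (D.hcpos s).2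
theorem Nr_surj (s : ℕ) : Function.Surjective (D.Nr s) :=
  Nmap_surj (hr_pos _).le (by positivity)

theorem lip_const (s : ℕ) : 8 * (2:ℝ) ^ (D.E s + D.M s) / hr (D.E s) = 2 ^ (2 * D.E s + D.M s + 3) := by
  rw [div_eq_iff (hr_pos _).ne']
  have := hr_two' (D.E s)
  have e : (2:ℝ) ^ (2 * D.E s + D.M s + 3) = 8 * 2 ^ (D.E s + D.M s) * 2 ^ D.E s := by
    rw [show 2 * D.E s + D.M s + 3 = (D.E s + D.M s) + D.E s + 3 by ring, pow_add, pow_add]; ring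
  rw [e, mul_assoc, this, mul_one]

theorem Nr_lower (s : ℕ) (z z' : ℝ × ℝ) : ‖z - z'‖ ≤ 2 ^ (2 * D.E s + D.M s + 3) * ‖D.Nr s z - D.Nr s z'‖ := by
  rw [← lip_const]
  exact Nmap_lower (hr_pos _) (hr_le_one _) (one_le_two _) (D.hcpos s).1 (D.hcpos s).2 z z'
theorem Nr_upper (s : ℕ) (z z' : ℝ × ℝ) : ‖D.Nr s z - D.Nr s z'‖ ≤ 2 ^ (2 * D.E s + D.M s + 3) * ‖z - z'‖ := by
  refine (Nmap_upper (hr_pos _).le (hr_le_one _) (one_le_two _) (D.hcpos s).1 (D.hcpos s).2 z z').trans ?_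
  refine mul_le_mul_of_nonneg_right ?_ (norm_nonneg _)
  have : 4 * (2:ℝ) ^ (D.E s + D.M s) = 2 ^ (D.E s + D.M s + 2) := by rw [pow_add]; ring
  rw [this]
  exact pow_le_pow_right₀ (by norm_num) (by omega)

theorem pow_step (s : ℕ) : (2:ℝ) ^ (2 * D.E s + D.M s + 3) * 2 ^ D.F s ≤ 2 ^ D.F (s + 1) := by
  rw [← pow_add]
  refine pow_le_pow_right₀ (by norm_num) ?_
  rw [F_succ]; unfold E; omega

theorem G_upper (s : ℕ) (z z' : ℝ × ℝ) : ‖D.G s z - D.G s z'‖ ≤ 2 ^ D.F s * ‖z - z'‖ := by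
  induction s with
  | zero => simp [G_zero, F]
  | succ s ih =>
    rw [G_succ, G_succ]
    calc _ ≤ 2 ^ (2 * D.E s + D.M s + 3) * ‖D.G s z - D.G s z'‖ := D.Nr_upper s _ _
      _ ≤ 2 ^ (2 * D.E s + D.M s + 3) * (2 ^ D.F s * ‖z - z'‖) := mul_le_mul_of_nonneg_left ih (by positivity)
      _ = (2 ^ (2 * D.E s + D.M s + 3) * 2 ^ D.F s) * ‖z - z'‖ := by ring
      _ ≤ _ := mul_le_mul_of_nonneg_right (D.pow_step s) (norm_nonneg _)

theorem G_lower (s : ℕ) (z z' : ℝ × ℝ) : ‖z - z'‖ ≤ 2 ^ D.F s * ‖D.G s z - D.G s z'‖ := by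
  induction s with
  | zero => simp [G_zero, F]
  | succ s ih =>
    rw [G_succ, G_succ]
    calc _ ≤ 2 ^ D.F s * ‖D.G s z - D.G s z'‖ := ih
      _ ≤ 2 ^ D.F s * (2 ^ (2 * D.E s + D.M s + 3) * ‖D.Nr s (D.G s z) - D.Nr s (D.G s z')‖) := 
        mul_le_mul_of_nonneg_left (D.Nr_lower s _ _) (by positivity)
      _ = (2 ^ (2 * D.E s + D.M s + 3) * 2 ^ D.F s) * ‖D.Nr s (D.G s z) - D.Nr s (D.G s z')‖ := by ring
      _ ≤ _ := mul_le_mul_of_nonneg_right (D.pow_step s) (norm_nonneg _)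

theorem G_inj (s : ℕ) : Function.Injective (D.G s) := by
  induction s with
  | zero => exact fun _ _ h => h
  | succ s ih => exact (D.Nr_inj s).comp ih
theorem G_cont (s : ℕ) : Continuous (D.G s) := by
  induction s with
  | zero => exact continuous_id
  | succ s ih => exact (D.Nr_cont s).comp ih
theorem G_surj (s : ℕ) : Function.Surjective (D.G s) := by
  induction s with
  | zero => exact Function.surjective_id
  | succ s ih => exact (D.Nr_surj s).comp ih

/-- the displacement at stage `s` -/
noncomputable def wr (s : ℕ) (z : ℝ × ℝ) : ℝ :=
  wact (D.act s) (hr (D.E s)) (hr (D.dl s (num s) + 2)) (2 ^ (D.E s + D.M s)) (D.c s : ℝ) z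

theorem Nr_fix {s : ℕ} {z : ℝ × ℝ} (h : ¬ 0 < D.wr s z) : D.Nr s z = z := Nmap_fix h
theorem Nr_mem_iff (s : ℕ) {S : ℝ × ℝ → Prop} (hS : ∀ z, 0 < D.wr s z → S z) (z : ℝ × ℝ) : S (D.Nr s z) ↔ S z :=
  Nmap_mem_iff (D.Nr_inj s) hS z
theorem act_of_wr {s : ℕ} {z : ℝ × ℝ} (h : 0 < D.wr s z) : D.act s = true := by
  by_contra hn
  have : D.act s = false := by simpa using hn
  rw [wr, wact, this] at h
  exact lt_irrefl _ h

theorem supp_norm {s : ℕ} {z : ℝ × ℝ} (h : 0 < D.wr s z) : ‖z‖ ≤ hr (D.dl s (num s)) := by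
  have := (wact_supp_norm (hr_pos _) (hr_pos _) (D.E_half s) (one_le_two _) (D.hcpos s).1 (D.hcpos s).2 h).1
  rw [hr_add, hr_eq 2] at this
  linarith

theorem supp_H {s : ℕ} {z : ℝ × ℝ} (h : 0 < D.wr s z) : D.H s z ≤ 0 := by
  obtain ⟨-, h1, h2, h3⟩ := wact_supp_norm (hr_pos _) (hr_pos _) (D.E_half s) (one_le_two _) (D.hcpos s).1 (D.hcpos s).2 h
  obtain ⟨hc0, hc1⟩ := D.hcpos s
  have hρ : hr (D.dl s (num s) + 2) ≤ 1/4 := by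
    have := hr_anti (show 2 ≤ D.dl s (num s) + 2 by omega)
    rw [hr_eq 2] at this; linarith
  have hρ0 := hr_pos (D.dl s (num s) + 2)
  set ρ := hr (D.dl s (num s) + 2)
  have hκ0 := hr_pos (D.E s)
  have hμ0 := hr_pos (D.M s)
  have hμ1 := hr_le_one (D.M s)
  have hv : |z.2 - D.c s * z.1| ≤ hr (D.M s) * hr (D.E s) := by
    have e : hr (D.E s + D.M s) * 2 ^ (D.E s + D.M s) = 1 := hr_two _
    have h4 : hr (D.E s + D.M s) * (2 ^ (D.E s + D.M s) * |z.2 - D.c s * z.1|) ≤ hr (D.E s + D.M s) * 1 :=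
      mul_le_mul_of_nonneg_left (by linarith) (hr_pos _).le
    rw [← mul_assoc, e, one_mul, mul_one, hr_add] at h4
    linarith
  unfold H hfun
  have hμκ : hr (D.M s) * hr (D.E s) ≤ 1 * hr (D.E s) := mul_le_mul_of_nonneg_right hμ1 hκ0.le
  rcases le_or_gt z.1 (hr (D.E s)) with hx | hx
  · refine (min_le_left _ _).trans ?_
    rw [nrm_eq, sub_nonpos, norm_le_iff]
    have : hr (D.E s) * ρ ≤ hr (D.E s) * (1/4) := mul_le_mul_of_nonneg_left hρ hκ0.le
    have hx1 : |z.1| ≤ hr (D.E s) := abs_le.2 ⟨by linarith, hx⟩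
    refine ⟨by linarith, ?_⟩
    rw [show z.2 = (z.2 - D.c s * z.1) + D.c s * z.1 by ring]
    refine (abs_add_le _ _).trans ?_
    rw [abs_mul, abs_of_nonneg hc0]
    have := mul_le_mul hc1 hx1 (abs_nonneg _) zero_le_one
    linarith
  · refine (min_le_right _ _).trans ?_
    have hx0 : 0 < z.1 := hκ0.trans hx
    have hv2 : |z.2 - D.c s * z.1| ≤ hr (D.M s) * z.1 := hv.trans (mul_le_mul_of_nonneg_left hx.le hμ0.le)
    have hv3 := abs_le.1 hv2
    have c1 : hr (D.M s) ≤ D.c s := by unfold hr; exact_mod_cast D.hc1 s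
    have c2 : D.c s + hr (D.M s) ≤ 1 := by unfold hr; exact_mod_cast D.hc2 s
    have c1' := mul_le_mul_of_nonneg_right c1 hx0.le
    have c2' := mul_le_mul_of_nonneg_right c2 hx0.le
    rw [kf_le_zero_iff]
    refine ⟨⟨by linarith, by linarith, by linarith⟩, fun j hj => ?_⟩
    have c3 : (D.rr j : ℝ) + hr (D.M s) ≤ |(D.c s : ℝ) - D.qc j| := by
      unfold hr; exact_mod_cast D.hc3 s j hj
    have c3' := mul_le_mul_of_nonneg_right c3 hx0.le
    rw [← abs_of_pos hx0, ← abs_mul, abs_of_pos hx0] at c3'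
    have : |((D.c s : ℝ) - D.qc j) * z.1| ≤ |z.2 - D.qc j * z.1| + |z.2 - D.c s * z.1| := by
      rw [show ((D.c s : ℝ) - D.qc j) * z.1 = (z.2 - D.qc j * z.1) - (z.2 - D.c s * z.1) by ring]
      exact abs_sub _ _
    linarith

/-- step (a) of the dynamics -/
theorem step_a {s n : ℕ} (h : D.act s = true → n ≤ num s) (x : ℝ × ℝ) :
    ‖D.G (s + 1) x‖ ≤ hr (D.dl (s + 1) n) ↔ ‖D.G s x‖ ≤ hr (D.dl s n) := by
  have e : D.dl (s + 1) n = D.dl s n := by unfold dl; rw [D.tau_succ_neg h]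
  rw [e, G_succ]
  refine D.Nr_mem_iff s (S := fun z => ‖z‖ ≤ hr (D.dl s n)) (fun z hz => ?_) _
  exact (D.supp_norm hz).trans (hr_anti (D.dl_mono s (h (D.act_of_wr hz))))

/-- step (b) of the dynamics -/
theorem step_b {s : ℕ} (h : D.act s = true) {x : ℝ × ℝ} (hx : ‖D.G s x‖ ≤ hr (D.dl s (num s + 1))) :
    hr (D.dl (s + 1) (num s + 1)) < ‖D.G (s + 1) x‖ := by
  rw [G_succ]
  set z := D.G s x
  set ρ := hr (D.dl s (num s) + 2) with hρ
  have hρ0 : 0 < ρ := hr_pos _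
  have e0 : D.Nr s (ρ, D.c s * ρ) = 0 := by
    unfold Nr; rw [h]; exact Nmap_center hρ0.le
  have e1 := D.Nr_lower s (ρ, D.c s * ρ) z
  rw [e0, zero_sub, norm_neg] at e1
  have e2 : ρ / 2 = hr (D.dl s (num s) + 3) := by
    rw [show D.dl s (num s) + 3 = D.dl s (num s) + 2 + 1 by ring, hr_add _ 1, hr_eq 1]; ring
  have e3 : ‖z‖ ≤ ρ / 2 := by
    rw [e2]; exact hx.trans (hr_anti (D.dl_succ _ _))
  have e4 : hr (D.E s) ≤ ρ / 2 := by rw [e2]; exact hr_anti (D.dl_num s)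
  have e5 : ρ / 2 ≤ ‖((ρ, D.c s * ρ) : ℝ × ℝ) - z‖ := by
    have f1 := (norm_comp_le (((ρ, D.c s * ρ) : ℝ × ℝ) - z)).1
    have f2 := (norm_comp_le z).1
    have f3 := le_abs_self z.1
    have f4 := le_abs_self (ρ - z.1)
    simp only [Prod.fst_sub] at f1
    linarith
  have e6 : hr (D.E s) ≤ 2 ^ (2 * D.E s + D.M s + 3) * ‖D.Nr s z‖ := e4.trans (e5.trans e1)
  have e7 : hr (D.F (s + 1)) ≤ ‖D.Nr s z‖ := by
    have g1 := mul_le_mul_of_nonneg_left e6 (hr_pos (2 * D.E s + D.M s + 3)).le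
    rw [← mul_assoc, hr_two, one_mul, ← hr_add] at g1
    rw [F_succ, show 3 * D.E s + D.M s + 3 = 2 * D.E s + D.M s + 3 + D.E s by ring]
    exact g1
  refine lt_of_lt_of_le (hr_lt ?_) e7
  unfold dl
  rw [D.tau_succ_pos h (Nat.lt_succ_self _)]
  omega

end Dat
end Dyn

section Dyn3
open Set
namespace Dat
variable (D : Dat)

/-- `n` is settled at stage `s`: no number below `n` acts at a stage `≥ s` -/
def St (n s : ℕ) : Prop := ∀ t, s ≤ t → D.act t = true → n ≤ num t

theorem St.mono {D : Dat} {n m s t : ℕ} (h : D.St n s) (hm : m ≤ n) (ht : s ≤ t) : D.St m t :=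
  fun u hu ha => hm.trans (h u (ht.trans hu) ha)

theorem exists_St (n : ℕ) : ∃ s, D.St n s := by
  have hfin : {t | D.act t = true ∧ num t < n}.Finite := by
    refine Set.Finite.of_finite_image (f := num) ((Set.finite_lt_nat n).subset ?_) ?_
    · rintro _ ⟨t, ht, rfl⟩; exact ht.2
    · intro s hs t ht h
      exact D.hact s t hs.1 ht.1 h
  obtain ⟨b, hb⟩ := hfin.bddAbove
  refine ⟨b + 1, fun t ht ha => ?_⟩
  by_contra hn
  have := hb (show t ∈ {t | D.act t = true ∧ num t < n} from ⟨ha, not_le.1 hn⟩)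
  omega

open Classical in
/-- the least stage at which `n` is settled -/
noncomputable def ts (n : ℕ) : ℕ := Nat.find (D.exists_St n)
theorem ts_spec (n : ℕ) : D.St n (D.ts n) := by classical exact Nat.find_spec (D.exists_St n)
theorem ts_le {n s : ℕ} (h : D.St n s) : D.ts n ≤ s := by classical exact Nat.find_min' (D.exists_St n) h
theorem ts_mono {m n : ℕ} (h : m ≤ n) : D.ts m ≤ D.ts n := D.ts_le ((D.ts_spec n).mono h le_rfl)

theorem tau_ts (n : ℕ) : D.tau (D.ts n) n = D.ts n := by
  rcases hs : D.ts n with _ | s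
  · rfl
  · have hn : ¬ D.St n s := fun h => by have := D.ts_le h; omega
    have hst : D.St n (s + 1) := hs ▸ D.ts_spec n
    unfold St at hn
    push Not at hn
    obtain ⟨t, h1, h2, h3⟩ := hn
    have : t = s := by
      by_contra hne
      have := hst t (by omega) h2
      omega
    subst this
    exact D.tau_succ_pos h2 h3

/-- nested closed cells -/
def Cc (n : ℕ) : Set (ℝ × ℝ) := {x | ‖D.G (D.ts n) x‖ ≤ hr (D.dl (D.ts n) n)}

theorem chain {n s t : ℕ} (hst : s ≤ t) (h : ∀ u, s ≤ u → u < t → D.act u = true → n ≤ num u) (x : ℝ × ℝ) :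
    ‖D.G t x‖ ≤ hr (D.dl t n) ↔ ‖D.G s x‖ ≤ hr (D.dl s n) := by
  induction t, hst using Nat.le_induction with
  | base => rfl
  | succ t ht ih =>
    rw [D.step_a (h t ht (Nat.lt_succ_self t)), ih fun u hu hu' => h u hu (by omega)]

theorem mem_Cc {n s : ℕ} (h : D.St n s) (x : ℝ × ℝ) : x ∈ D.Cc n ↔ ‖D.G s x‖ ≤ hr (D.dl s n) :=
  (D.chain (D.ts_le h) (fun u hu _ => D.ts_spec n u hu) x).symm

theorem Cc_anti (n : ℕ) : D.Cc (n + 1) ⊆ D.Cc n := by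
  intro x hx
  have hs := D.ts_spec (n + 1)
  rw [D.mem_Cc (hs.mono (Nat.le_succ n) le_rfl)]
  exact ((D.mem_Cc hs x).1 hx).trans (hr_anti (D.dl_mono _ (Nat.le_succ n)))

theorem Cc_diam {n : ℕ} {x y : ℝ × ℝ} (hx : x ∈ D.Cc n) (hy : y ∈ D.Cc n) : ‖x - y‖ ≤ 2 * hr n := by
  have hx' : ‖D.G (D.ts n) x‖ ≤ hr (D.dl (D.ts n) n) := hx
  have hy' : ‖D.G (D.ts n) y‖ ≤ hr (D.dl (D.ts n) n) := hy
  have h1 := D.G_lower (D.ts n) x y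
  have h2 : ‖D.G (D.ts n) x - D.G (D.ts n) y‖ ≤ 2 * hr (D.dl (D.ts n) n) := (norm_sub_le _ _).trans (by linarith)
  have h3 : (2:ℝ) ^ D.F (D.ts n) * (2 * hr (D.dl (D.ts n) n)) = 2 * hr (3 * n) := by
    unfold dl; rw [D.tau_ts, hr_add]
    have := hr_two' (D.F (D.ts n))
    linear_combination 2 * hr (3 * n) * this
  calc _ ≤ _ := h1
    _ ≤ (2:ℝ) ^ D.F (D.ts n) * (2 * hr (D.dl (D.ts n) n)) := mul_le_mul_of_nonneg_left h2 (by positivity)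
    _ = _ := h3
    _ ≤ _ := by linarith [hr_anti (show n ≤ 3 * n by omega)]

theorem Cc_closed (n : ℕ) : IsClosed (D.Cc n) := isClosed_le ((D.G_cont _).norm) continuous_const

theorem Cc_compact (n : ℕ) : IsCompact (D.Cc n) := by
  refine Metric.isCompact_of_isClosed_isBounded (D.Cc_closed n) ?_
  rw [Metric.isBounded_iff]
  exact ⟨2 * hr n, fun x hx y hy => by rw [dist_eq_norm]; exact D.Cc_diam hx hy⟩

theorem Cc_nonempty (n : ℕ) : (D.Cc n).Nonempty := by
  obtain ⟨x, hx⟩ := D.G_surj (D.ts n) 0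
  refine ⟨x, ?_⟩
  change ‖D.G (D.ts n) x‖ ≤ _
  rw [hx, norm_zero]; exact (hr_pos _).le

theorem exists_p : ∃ p, ∀ n, p ∈ D.Cc n := by
  obtain ⟨p, hp⟩ := IsCompact.nonempty_iInter_of_sequence_nonempty_isCompact_isClosed D.Cc D.Cc_anti D.Cc_nonempty
    (D.Cc_compact 0) D.Cc_closed
  exact ⟨p, fun n => mem_iInter.1 hp n⟩

/-- the vertex of the dendroid -/
noncomputable def p : ℝ × ℝ := D.exists_p.choose
theorem p_mem (n : ℕ) : D.p ∈ D.Cc n := D.exists_p.choose_spec n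
theorem eq_p {x : ℝ × ℝ} (h : ∀ n, x ∈ D.Cc n) : x = D.p := by
  by_contra hne
  have h0 : 0 < ‖x - D.p‖ := norm_pos_iff.2 (sub_ne_zero.2 hne)
  obtain ⟨n, hn⟩ := hr_small (half_pos h0)
  have := D.Cc_diam (h n) (D.p_mem n)
  linarith

theorem p_iff (s n : ℕ) : ‖D.G s D.p‖ ≤ hr (D.dl s n) ↔ D.St n s := by
  classical
  constructor
  · intro h
    by_contra hn
    unfold St at hn
    push Not at hn
    obtain ⟨t0, ht0, ha0, hn0⟩ := hn
    have hex : ∃ m, ∃ t, s ≤ t ∧ D.act t = true ∧ num t = m := ⟨_, t0, ht0, ha0, rfl⟩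
    obtain ⟨t, ht, ha, hm⟩ := Nat.find_spec hex
    set m := Nat.find hex
    have hmin : ∀ u, s ≤ u → D.act u = true → m ≤ num u := fun u hu hau => Nat.find_min' hex ⟨u, hu, hau, rfl⟩
    have hmn : m + 1 ≤ n := by
      have := hmin t0 ht0 ha0
      omega
    have hne : ∀ u, s ≤ u → u ≠ t → D.act u = true → m + 1 ≤ num u := by
      intro u hu hut hau
      have h1 := hmin u hu hau
      have h2 : num u ≠ m := fun h' => hut (D.hact u t hau ha (by
        change num u = num t
        rw [h', hm]))
      omega
    have h1 : ‖D.G s D.p‖ ≤ hr (D.dl s (m + 1)) := h.trans (hr_anti (D.dl_mono s hmn))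
    have h2 : ‖D.G t D.p‖ ≤ hr (D.dl t (m + 1)) := (D.chain ht (fun u hu hut => hne u hu hut.ne) _).2 h1
    rw [← hm] at h2
    have h3 := D.step_b ha h2
    have h4 : D.St (num t + 1) (t + 1) := by
      intro u hu hau
      rw [hm]
      exact hne u (by omega) (by omega) hau
    have h5 := (D.mem_Cc h4 D.p).1 (D.p_mem _)
    linarith
  · intro h
    exact (D.mem_Cc h _).1 (D.p_mem n)

theorem eventually_const {n : ℕ} {x : ℝ × ℝ} (hx : x ∉ D.Cc n) {s : ℕ} (hs : D.ts n ≤ s) : D.G s x = D.G (D.ts n) x := by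
  induction s, hs using Nat.le_induction with
  | base => rfl
  | succ s hs ih =>
    rw [G_succ, ← ih]
    refine D.Nr_fix fun h => hx ?_
    have hst : D.St n s := (D.ts_spec n).mono le_rfl hs
    rw [D.mem_Cc hst]
    exact (D.supp_norm h).trans (hr_anti (D.dl_mono s (hst s le_rfl (D.act_of_wr h))))

open Classical in
/-- the limit map -/
noncomputable def Gi (x : ℝ × ℝ) : ℝ × ℝ := if h : ∃ n, x ∉ D.Cc n then D.G (D.ts (Nat.find h)) x else 0

theorem Gi_eq {n : ℕ} {x : ℝ × ℝ} (hx : x ∉ D.Cc n) {s : ℕ} (hs : D.ts n ≤ s) : D.G s x = D.Gi x := by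
  classical
  have h : ∃ n, x ∉ D.Cc n := ⟨n, hx⟩
  have h2 : D.Gi x = D.G (D.ts (Nat.find h)) x := by
    unfold Gi; rw [dif_pos h]
  rw [h2]
  exact D.eventually_const (Nat.find_spec h) ((D.ts_mono (Nat.find_min' h hx)).trans hs)

theorem Gi_p : D.Gi D.p = 0 := by
  classical
  unfold Gi
  rw [dif_neg]
  push Not
  exact D.p_mem

theorem ne_p {x : ℝ × ℝ} (hx : x ≠ D.p) : ∃ n, x ∉ D.Cc n := by
  by_contra h
  push Not at h
  exact hx (D.eq_p h)

theorem Gi_norm {n : ℕ} {x : ℝ × ℝ} (hx : x ∉ D.Cc n) : hr (D.dl (D.ts n) n) < ‖D.Gi x‖ := by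
  rw [← D.Gi_eq hx le_rfl]
  exact not_le.1 hx

theorem Gi_ne {x : ℝ × ℝ} (hx : x ≠ D.p) : D.Gi x ≠ 0 := by
  obtain ⟨n, hn⟩ := D.ne_p hx
  have h1 := D.Gi_norm hn
  have h2 := hr_pos (D.dl (D.ts n) n)
  intro h
  rw [h, norm_zero] at h1
  linarith

theorem Gi_inj : Function.Injective D.Gi := by
  intro x y h
  by_cases hx : x = D.p
  · by_cases hy : y = D.p
    · rw [hx, hy]
    · rw [hx, Gi_p] at h
      exact absurd h.symm (D.Gi_ne hy)
  · by_cases hy : y = D.p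
    · rw [hy, Gi_p] at h
      exact absurd h (D.Gi_ne hx)
    · obtain ⟨n, hn⟩ := D.ne_p hx
      obtain ⟨m, hm⟩ := D.ne_p hy
      rw [← D.Gi_eq hn (le_max_left _ (D.ts m)), ← D.Gi_eq hm (le_max_right (D.ts n) _)] at h
      exact D.G_inj _ h

theorem dl_ge (s n : ℕ) : n ≤ D.dl s n := by unfold dl; omega

theorem Gi_surj : Function.Surjective D.Gi := by
  intro z
  by_cases hz : z = 0
  · exact ⟨D.p, by rw [hz, Gi_p]⟩
  · obtain ⟨n, hn⟩ := hr_small (norm_pos_iff.2 hz)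
    obtain ⟨x, hx⟩ := D.G_surj (D.ts n) z
    have hxn : x ∉ D.Cc n := by
      intro h
      have h' : ‖D.G (D.ts n) x‖ ≤ hr (D.dl (D.ts n) n) := h
      rw [hx] at h'
      have := hr_anti (D.dl_ge (D.ts n) n)
      linarith
    exact ⟨x, by rw [← D.Gi_eq hxn le_rfl, hx]⟩

theorem Gi_small {n : ℕ} {x : ℝ × ℝ} (hx : x ∈ D.Cc n) : ‖D.Gi x‖ ≤ hr n := by
  by_cases hxp : x = D.p
  · rw [hxp, Gi_p, norm_zero]; exact (hr_pos n).le
  · obtain ⟨m, hm⟩ := D.ne_p hxp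
    rw [← D.Gi_eq hm (le_max_left _ (D.ts n))]
    exact ((D.mem_Cc ((D.ts_spec n).mono le_rfl (le_max_right _ _)) x).1 hx).trans (hr_anti (D.dl_ge _ n))

theorem Gi_cont : Continuous D.Gi := by
  rw [continuous_iff_continuousAt]
  intro x
  by_cases hx : x = D.p
  · subst hx
    rw [ContinuousAt, Gi_p, Metric.tendsto_nhds]
    intro ε hε
    obtain ⟨n, hn⟩ := hr_small hε
    have hst : D.St n (D.ts (n + 1)) := (D.ts_spec (n + 1)).mono (Nat.le_succ n) le_rfl
    have hlt : ‖D.G (D.ts (n + 1)) D.p‖ < hr (D.dl (D.ts (n + 1)) n) :=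
      lt_of_le_of_lt (D.p_mem (n + 1)) (hr_lt (by have := D.dl_succ (D.ts (n + 1)) n; omega))
    have hev := (D.G_cont (D.ts (n + 1))).norm.continuousAt.eventually_lt (continuousAt_const (y := hr (D.dl (D.ts (n + 1)) n))) hlt
    filter_upwards [hev] with y hy
    rw [dist_zero_right]
    exact (D.Gi_small ((D.mem_Cc hst y).2 hy.le)).trans_lt hn
  · obtain ⟨n, hn⟩ := D.ne_p hx
    have hev : D.G (D.ts n) =ᶠ[nhds x] D.Gi := by
      filter_upwards [(D.Cc_closed n).isOpen_compl.mem_nhds hn] with y hy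
      exact D.Gi_eq hy le_rfl
    exact (D.G_cont _).continuousAt.congr hev

theorem H_mono (z : ℝ × ℝ) : Monotone (fun s => D.H s z) := by
  refine monotone_nat_of_le_succ fun s => ?_
  unfold H hfun
  refine min_le_min ?_ (kf_mono _ _ z (Nat.le_succ s))
  have := hr_anti (D.E_mono (Nat.le_succ s))
  simp only [Nat.succ_eq_add_one] at this
  linarith

theorem H_lip (s : ℕ) (z z' : ℝ × ℝ) : D.H s z ≤ D.H s z' + 3 * ‖z - z'‖ := by
  refine hfun_lip _ _ _ (fun j => ?_) (fun j => ?_) s z z'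
  · have := D.hqc j
    exact ⟨by exact_mod_cast this.1, by exact_mod_cast this.2⟩
  · have := D.hrr j
    exact ⟨by exact_mod_cast this.1, by exact_mod_cast this.2⟩

theorem HG_lip (s : ℕ) (z z' : ℝ × ℝ) : D.H s (D.G s z) ≤ D.H s (D.G s z') + 3 * 2 ^ D.F s * ‖z - z'‖ := by
  have h1 := D.H_lip s (D.G s z) (D.G s z')
  have h2 := D.G_upper s z z'
  linarith

theorem H_cont (s : ℕ) : Continuous (D.H s) := by
  have : LipschitzWith 3 (D.H s) := by
    refine LipschitzWith.of_le_add_mul 3 fun z z' => ?_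
    rw [dist_eq_norm]
    exact_mod_cast D.H_lip s z z'
  exact this.continuous

theorem Q_closed : IsClosed D.Q := by
  have : D.Q = ⋂ s, {x | D.H s (D.G s x) ≤ 0} := by
    ext x; simp [mem_Q]
  rw [this]
  exact isClosed_iInter fun s => isClosed_le ((D.H_cont s).comp (D.G_cont s)) continuous_const

theorem Q_compact : IsCompact D.Q := by
  refine Metric.isCompact_of_isClosed_isBounded D.Q_closed ?_
  refine (Metric.isBounded_closedBall (x := (0 : ℝ × ℝ)) (r := 2)).subset fun x hx => ?_
  rw [mem_closedBall_zero_iff]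
  have h := D.mem_Q.1 hx 0
  rw [G_zero] at h
  unfold H hfun at h
  rcases min_le_iff.1 h with h | h
  · rw [nrm_eq] at h
    have := hr_le_one (D.E 0)
    linarith
  · rw [kf_le_zero_iff] at h
    obtain ⟨⟨h1, h2, h3⟩, -⟩ := h
    rw [norm_le_iff]
    exact ⟨abs_le.2 ⟨by linarith, by linarith⟩, abs_le.2 ⟨by linarith, by linarith⟩⟩

theorem fan_iff (hne : D.P.Nonempty) (z : ℝ × ℝ) : z ∈ FanSet D.P ↔ 
    ∀ s, kf (fun j => (D.qc j : ℝ)) (fun j => (D.rr j : ℝ)) s z ≤ 0 := by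
  constructor
  · rintro ⟨t, ht, c, hc, rfl⟩ s
    rw [kf_le_zero_iff]
    obtain ⟨⟨hc0, hc1⟩, hcj⟩ := D.mem_P.1 hc
    refine ⟨⟨ht.2, mul_nonneg ht.1 hc0, mul_le_of_le_one_right ht.1 hc1⟩, fun j _ => ?_⟩
    simp only
    rw [show t * c - D.qc j * t = (c - D.qc j) * t by ring, abs_mul, abs_of_nonneg ht.1]
    exact mul_le_mul_of_nonneg_right (hcj j) ht.1
  · intro h
    simp only [kf_le_zero_iff] at h
    obtain ⟨⟨h1, h2, h3⟩, -⟩ := h 0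
    have h0 : 0 ≤ z.1 := h2.trans h3
    rcases h0.eq_or_lt with h0 | h0
    · have : z = 0 := Prod.ext h0.symm (by simp only [Prod.snd_zero]; linarith)
      rw [this]; exact FanSet.zero_mem hne
    · refine ⟨z.1, ⟨h0.le, h1⟩, z.2 / z.1, ⟨⟨div_nonneg h2 h0.le, (div_le_one h0).2 h3⟩, fun j => ?_⟩, ?_⟩
      · have := (h (j + 1)).2 j (Nat.lt_succ_self j)
        rw [show z.2 - D.qc j * z.1 = (z.2 / z.1 - D.qc j) * z.1 by field_simp, abs_mul, abs_of_pos h0] at this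
        exact le_of_mul_le_mul_right this h0
      · refine Prod.ext rfl ?_
        simp only; field_simp

theorem mem_Q_of_fan (hne : D.P.Nonempty) {x : ℝ × ℝ} (hx : x ≠ D.p) : x ∈ D.Q ↔ D.Gi x ∈ FanSet D.P := by
  obtain ⟨n, hn⟩ := D.ne_p hx
  have hG : ∀ s, D.ts n ≤ s → D.G s x = D.Gi x := fun s hs => D.Gi_eq hn hs
  rw [D.fan_iff hne, mem_Q]
  constructor
  · intro h s
    obtain ⟨m, hm⟩ := hr_small (half_pos (norm_pos_iff.2 (D.Gi_ne hx)))
    have h1 := h (max (max s m) (D.ts n))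
    rw [hG _ (le_max_right _ _)] at h1
    set u := max (max s m) (D.ts n)
    have hsu : s ≤ u := (le_max_left _ _).trans (le_max_left _ _)
    have hmu : m ≤ u := (le_max_right _ _).trans (le_max_left _ _)
    have hE := hr_anti (hmu.trans (D.E_ge u))
    rcases min_le_iff.1 h1 with h1 | h1
    · rw [nrm_eq] at h1; linarith
    · exact (kf_mono _ _ _ hsu).trans h1
  · intro h s
    have hbig : ∀ s, D.ts n ≤ s → D.H s (D.G s x) ≤ 0 := fun s hs => by
      rw [hG s hs]
      exact (min_le_right _ _).trans (h s)
    have hback : ∀ s, D.H (s + 1) (D.G (s + 1) x) ≤ 0 → D.H s (D.G s x) ≤ 0 := by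
      intro s hs
      have h1 : D.H s (D.G (s + 1) x) ≤ 0 := (D.H_mono _ (Nat.le_succ s)).trans hs
      rw [G_succ] at h1
      exact (D.Nr_mem_iff s (S := fun z => D.H s z ≤ 0) (fun z hz => D.supp_H hz) _).1 h1
    have hall : ∀ k s, D.ts n ≤ s + k → D.H s (D.G s x) ≤ 0 := by
      intro k
      induction k with
      | zero => exact fun s hs => hbig s hs
      | succ k ih => exact fun s hs => hback s (ih (s + 1) (by omega))
    exact hall (D.ts n) s (by omega)

theorem p_mem_Q (hne : D.P.Nonempty) : D.p ∈ D.Q := by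
  rw [← D.Q_closed.closure_eq, Metric.mem_closure_iff]
  intro ε hε
  obtain ⟨n, hn⟩ := hr_small (half_pos hε)
  obtain ⟨c, hc⟩ := hne
  have hc01 := (D.mem_P.1 hc).1
  set t := hr (D.dl (D.ts n) n)
  have ht0 : 0 < t := hr_pos _
  have ht1 : t ≤ 1 := hr_le_one _
  have hfan : (t, t * c) ∈ FanSet D.P := ⟨t, ⟨ht0.le, ht1⟩, c, hc, rfl⟩
  obtain ⟨x, hx⟩ := D.Gi_surj (t, t * c)
  have hxp : x ≠ D.p := by
    rintro rfl
    rw [Gi_p] at hx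
    have := congrArg Prod.fst hx
    simp only [Prod.fst_zero] at this
    linarith
  have hxn : x ∈ D.Cc n := by
    by_contra h
    have h1 := D.Gi_norm h
    rw [hx] at h1
    have : ‖((t, t * c) : ℝ × ℝ)‖ ≤ t := by
      rw [norm_le_iff]
      simp only [abs_mul, abs_of_pos ht0, abs_of_nonneg hc01.1]
      exact ⟨le_rfl, mul_le_of_le_one_right ht0.le hc01.2⟩
    exact absurd h1 (not_lt.2 this)
  refine ⟨x, (D.mem_Q_of_fan ⟨c, hc⟩ hxp).2 (hx ▸ hfan), ?_⟩
  rw [dist_eq_norm]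
  have := D.Cc_diam (D.p_mem n) hxn
  linarith

theorem Q_bij (hne : D.P.Nonempty) : BijOn D.Gi D.Q (FanSet D.P) := by
  refine ⟨?_, D.Gi_inj.injOn, ?_⟩
  · intro x hx
    by_cases hxp : x = D.p
    · rw [hxp, Gi_p]; exact FanSet.zero_mem hne
    · exact (D.mem_Q_of_fan hne hxp).1 hx
  · intro z hz
    obtain ⟨x, rfl⟩ := D.Gi_surj z
    refine ⟨x, ?_, rfl⟩
    by_cases hxp : x = D.p
    · rw [hxp]; exact D.p_mem_Q hne
    · exact (D.mem_Q_of_fan hne hxp).2 hz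

theorem P_compact : IsCompact D.P := by
  refine Metric.isCompact_of_isClosed_isBounded ?_ ((Metric.isBounded_Icc 0 1).subset fun c hc => hc.1)
  have : D.P = Icc 0 1 ∩ ⋂ j, {c : ℝ | (D.rr j : ℝ) ≤ |c - D.qc j|} := by
    ext c; simp [mem_P]
  rw [this]
  exact isClosed_Icc.inter (isClosed_iInter fun j => isClosed_le continuous_const (by fun_prop))

theorem Q_dendroid (hne : D.P.Nonempty) (hg : Gappy D.P) : IsDendroid D.Q :=
  (FanSet.dendroid D.P_compact hne hg).transport D.Q_compact D.Gi_cont.continuousOn (D.Q_bij hne)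

end Dat
end Dyn3

section EffRat
section Combinators
variable {α : Type*} [Primcodable α]
theorem cadd {f g : α → ℚ} (hf : Computable f) (hg : Computable g) : Computable (fun a => f a + g a) := computable_Qadd.comp hf hg
theorem csub {f g : α → ℚ} (hf : Computable f) (hg : Computable g) : Computable (fun a => f a - g a) := computable_Qsub.comp hf hg
theorem cmul {f g : α → ℚ} (hf : Computable f) (hg : Computable g) : Computable (fun a => f a * g a) := computable_Qmul.comp hf hg
theorem cdiv {f g : α → ℚ} (hf : Computable f) (hg : Computable g) : Computable (fun a => f a / g a) := computable_Qdiv.comp hf hg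
theorem cmax {f g : α → ℚ} (hf : Computable f) (hg : Computable g) : Computable (fun a => max (f a) (g a)) := computable_Qmax.comp hf hg
theorem cmin {f g : α → ℚ} (hf : Computable f) (hg : Computable g) : Computable (fun a => min (f a) (g a)) := computable_Qmin.comp hf hg
theorem cneg {f : α → ℚ} (hf : Computable f) : Computable (fun a => - (f a)) := computable_Qneg.comp hf
theorem cabs {f : α → ℚ} (hf : Computable f) : Computable (fun a => |f a|) := computable_Qabs.comp hf
theorem cle {f g : α → ℚ} (hf : Computable f) (hg : Computable g) : Computable (fun a => decide (f a ≤ g a)) := computable_Qle.comp hf hg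
theorem chp {f : α → ℕ} (hf : Computable f) : Computable (fun a => hp (f a)) := computable_hp.comp hf
theorem cpw {f : α → ℕ} (hf : Computable f) : Computable (fun a => (2:ℚ) ^ (f a)) :=
  (computable_Qinv.comp (chp hf)).of_eq fun a => by simp [hp]
theorem cnadd {f g : α → ℕ} (hf : Computable f) (hg : Computable g) : Computable (fun a => f a + g a) := Primrec.nat_add.to_comp.comp hf hg
theorem cnmul {f g : α → ℕ} (hf : Computable f) (hg : Computable g) : Computable (fun a => f a * g a) := Primrec.nat_mul.to_comp.comp hf hg
theorem cnlt {f g : α → ℕ} (hf : Computable f) (hg : Computable g) : Computable (fun a => decide (f a < g a)) := 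
  (Primrec.nat_lt.decide.to_comp.comp hf hg)
theorem cand {f g : α → Bool} (hf : Computable f) (hg : Computable g) : Computable (fun a => f a && g a) := Primrec.and.to_comp.comp hf hg
end Combinators

theorem cnum : Computable Dat.num := Computable.fst.comp Computable.unpair

/-- push forward of rational pairs -/
def rp (z : ℚ × ℚ) : ℝ × ℝ := ((z.1 : ℝ), (z.2 : ℝ))

theorem rp_nrm (z : ℚ × ℚ) : ‖rp z‖ = ((nrm z : ℚ) : ℝ) := by
  rw [← nrm_eq]; simp [nrm, rp]

namespace Dat
variable (D : Dat)

/-- The data are computable. -/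
structure Eff : Prop where
  qc : Computable D.qc
  rr : Computable D.rr
  c : Computable D.c
  M : Computable D.M
  act : Computable D.act

/-- rational push -/
def Nq (s : ℕ) : ℚ × ℚ → ℚ × ℚ :=
  Nmap (D.act s) (hp (D.E s)) (hp (D.dl s (num s) + 2)) (2 ^ (D.E s + D.M s)) (D.c s)
/-- rational version of `G` -/
def Gq (s : ℕ) (z : ℚ × ℚ) : ℚ × ℚ := Nat.rec (motive := fun _ => ℚ × ℚ) z (fun s z => D.Nq s z) s
/-- rational version of `H` -/
def Hq (s : ℕ) (z : ℚ × ℚ) : ℚ := hfun (hp (D.E s)) D.qc D.rr s z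

theorem Nr_rp (s : ℕ) (z : ℚ × ℚ) : D.Nr s (rp z) = rp (D.Nq s z) := by
  have : wact (D.act s) (hr (D.E s)) (hr (D.dl s (num s) + 2)) (2 ^ (D.E s + D.M s)) (D.c s : ℝ) (rp z)
      = ((wact (D.act s) (hp (D.E s)) (hp (D.dl s (num s) + 2)) (2 ^ (D.E s + D.M s)) (D.c s) z : ℚ) : ℝ) := by
    unfold wact
    cases D.act s
    · simp
    · simp [wf, rp, hr]
  unfold Nr Nq Nmap
  rw [this]
  simp [rp]

theorem G_rp (s : ℕ) (z : ℚ × ℚ) : D.G s (rp z) = rp (D.Gq s z) := by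
  induction s with
  | zero => rfl
  | succ s ih => 
    rw [G_succ, ih, Nr_rp]; rfl

theorem kf_rp (s : ℕ) (z : ℚ × ℚ) : kf (fun j => (D.qc j : ℝ)) (fun j => (D.rr j : ℝ)) s (rp z) = ((kf D.qc D.rr s z : ℚ) : ℝ) := by
  induction s with
  | zero => simp [kf, rp]
  | succ s ih =>
    simp only [kf] at ih ⊢
    rw [ih]
    simp [rp]

theorem H_rp (s : ℕ) (z : ℚ × ℚ) : D.H s (rp z) = ((D.Hq s z : ℚ) : ℝ) := by
  unfold H Hq hfun
  rw [D.kf_rp, nrm_eq, rp_nrm]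
  simp [hr]

variable {D}
theorem Eff.tau (h : D.Eff) : Computable₂ D.tau := by
  have : Computable (fun p : ℕ × ℕ => Nat.rec (motive := fun _ => ℕ) 0
      (fun s t => cond (D.act s && decide (num s < p.2)) (s + 1) t) p.1) := by
    refine Computable.nat_rec (f := fun p : ℕ × ℕ => p.1) (g := fun _ => 0) 
      (h := fun p q => cond (D.act q.1 && decide (num q.1 < p.2)) (q.1 + 1) q.2) Computable.fst (Computable.const 0) ?_
    have e1 : Computable (fun x : (ℕ × ℕ) × (ℕ × ℕ) => x.2.1) := Computable.fst.comp Computable.snd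
    refine Computable.cond (cand (h.act.comp e1) (cnlt (cnum.comp e1) (Computable.snd.comp Computable.fst))) 
      (Computable.succ.comp e1) (Computable.snd.comp Computable.snd)
  exact this

theorem Eff.F (h : D.Eff) : Computable D.F := by
  have : Computable (fun s : ℕ => Nat.rec (motive := fun _ => ℕ) 0
      (fun s f => 3 * (f + 3 * s + 3) + D.M s + 3) s) := by
    refine Computable.nat_rec (f := fun p : ℕ => p) (g := fun _ => 0) 
      (h := fun p q => 3 * (q.2 + 3 * q.1 + 3) + D.M q.1 + 3) Computable.id (Computable.const 0) ?_
    have e1 : Computable (fun x : ℕ × (ℕ × ℕ) => x.2.1) := Computable.fst.comp Computable.snd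
    have e2 : Computable (fun x : ℕ × (ℕ × ℕ) => x.2.2) := Computable.snd.comp Computable.snd
    have k : Computable (fun x : ℕ × (ℕ × ℕ) => 3) := Computable.const 3
    exact cnadd (cnadd (cnmul k (cnadd (cnadd e2 (cnmul k e1)) k)) (h.M.comp e1)) k
  exact this

theorem Eff.E (h : D.Eff) : Computable D.E := 
  cnadd (cnadd h.F (cnmul (Computable.const 3) Computable.id)) (Computable.const 3)

theorem Eff.dl (h : D.Eff) : Computable₂ D.dl := 
  cnadd (h.F.comp h.tau) (cnmul (Computable.const 3) Computable.snd)

theorem Eff.Nq (h : D.Eff) : Computable₂ D.Nq := by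
  have hs : Computable (fun p : ℕ × (ℚ × ℚ) => p.1) := Computable.fst
  have z1 : Computable (fun p : ℕ × (ℚ × ℚ) => p.2.1) := Computable.fst.comp Computable.snd
  have z2 : Computable (fun p : ℕ × (ℚ × ℚ) => p.2.2) := Computable.snd.comp Computable.snd
  have κ := chp (h.E.comp hs)
  have ρ := chp (cnadd (h.dl.comp hs (cnum.comp hs)) (Computable.const 2))
  have ν := cpw (cnadd (h.E.comp hs) (h.M.comp hs))
  have c := h.c.comp hs
  have v := csub z2 (cmul c z1)
  have w : Computable (fun p : ℕ × (ℚ × ℚ) => wact (D.act p.1) (hp (D.E p.1)) (hp (D.dl p.1 (num p.1) + 2)) (2 ^ (D.E p.1 + D.M p.1)) (D.c p.1) p.2) := by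
    refine Computable.cond (h.act.comp hs) ?_ (Computable.const 0)
    exact cmax (Computable.const 0) (cmin (cadd z1 (cmul κ (csub ρ z1))) (cmin (csub (cmul (Computable.const 2) ρ) z1)
      (csub ρ (cmul ν (cmax v (cneg v))))))
  exact (csub z1 w).pair (csub z2 (cmul c w))

theorem Eff.Gq (h : D.Eff) : Computable₂ D.Gq := by
  have : Computable (fun p : ℕ × (ℚ × ℚ) => Nat.rec (motive := fun _ => ℚ × ℚ) p.2 (fun s z => D.Nq s z) p.1) := by
    refine Computable.nat_rec (f := fun p : ℕ × (ℚ × ℚ) => p.1) (g := fun p => p.2) 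
      (h := fun p q => D.Nq q.1 q.2) Computable.fst Computable.snd ?_
    exact h.Nq.comp (Computable.fst.comp Computable.snd) (Computable.snd.comp Computable.snd)
  exact this

theorem cnrm : Computable (fun z : ℚ × ℚ => nrm z) := 
  cmax (cmax Computable.fst (cneg Computable.fst)) (cmax Computable.snd (cneg Computable.snd))

theorem Eff.Hq (h : D.Eff) : Computable₂ D.Hq := by
  have z1 : Computable (fun p : ℕ × (ℚ × ℚ) => p.2.1) := Computable.fst.comp Computable.snd
  have z2 : Computable (fun p : ℕ × (ℚ × ℚ) => p.2.2) := Computable.snd.comp Computable.snd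
  have k : Computable (fun p : ℕ × (ℚ × ℚ) => kf D.qc D.rr p.1 p.2) := by
    refine Computable.nat_rec (f := fun p : ℕ × (ℚ × ℚ) => p.1) (g := fun p => max (p.2.1 - 1) (max (-p.2.2) (p.2.2 - p.2.1)))
      (h := fun p q => max q.2 (D.rr q.1 * p.2.1 - max (p.2.2 - D.qc q.1 * p.2.1) (-(p.2.2 - D.qc q.1 * p.2.1)))) Computable.fst 
      (cmax (csub z1 (Computable.const 1)) (cmax (cneg z2) (csub z2 z1))) ?_
    have j : Computable (fun x : (ℕ × (ℚ × ℚ)) × (ℕ × ℚ) => x.2.1) := Computable.fst.comp Computable.snd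
    have y1 : Computable (fun x : (ℕ × (ℚ × ℚ)) × (ℕ × ℚ) => x.1.2.1) := z1.comp Computable.fst
    have y2 : Computable (fun x : (ℕ × (ℚ × ℚ)) × (ℕ × ℚ) => x.1.2.2) := z2.comp Computable.fst
    have v := csub y2 (cmul (h.qc.comp j) y1)
    exact cmax (Computable.snd.comp Computable.snd) (csub (cmul (h.rr.comp j) y1) (cmax v (cneg v)))
  exact cmin (csub (cnrm.comp Computable.snd) (cmul (Computable.const 2) (chp (h.E.comp Computable.fst)))) k

theorem Eff.pi01 (h : D.Eff) : IsPi01Closed D.Q := by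
  refine ⟨fun a => ∃ s, decide (3 * (2:ℚ) ^ D.F s * a.2 ≤ D.Hq s (D.Gq s a.1)) = true, ?_, ?_⟩
  · refine REPred.of_exists_nat (f := fun (a : (ℚ × ℚ) × ℚ) s => decide (3 * (2:ℚ) ^ D.F s * a.2 ≤ D.Hq s (D.Gq s a.1))) ?_
    exact cle (cmul (cmul (Computable.const 3) (cpw (h.F.comp Computable.snd))) (Computable.snd.comp Computable.fst))
      (h.Hq.comp Computable.snd (h.Gq.comp Computable.snd (Computable.fst.comp Computable.fst)))
  · ext x
    simp only [Set.mem_sdiff, Set.mem_univ, true_and, Set.mem_iUnion, Set.mem_ofPred_eq, not_exists, ballOfCode, decide_eq_true_eq]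
    rw [mem_Q]
    constructor
    · rintro hx a ⟨s, hs⟩ hd
      change dist x (rp a.1) < _ at hd
      have h1 := D.HG_lip s (rp a.1) x
      have h2 := hx s
      rw [G_rp, H_rp, ← dist_eq_norm, dist_comm] at h1
      have h3 : (3 * (2:ℝ) ^ D.F s * a.2 ≤ D.Hq s (D.Gq s a.1)) := by exact_mod_cast hs
      have h4 : (0:ℝ) < 3 * 2 ^ D.F s := by positivity
      have := mul_lt_mul_of_pos_left hd h4
      linarith
    · intro hx s
      by_contra hs
      push Not at hs
      set η := D.H s (D.G s x) with hη
      have h4 : (0:ℝ) < 3 * 2 ^ D.F s := by positivity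
      obtain ⟨r, hr0, hr1⟩ := exists_rat_btwn (show (0:ℝ) < η / (2 * (3 * 2 ^ D.F s)) by positivity)
      obtain ⟨a, ha1, ha2⟩ := exists_rat_btwn (show x.1 - (r : ℝ) < x.1 by linarith)
      obtain ⟨b, hb1, hb2⟩ := exists_rat_btwn (show x.2 - (r : ℝ) < x.2 by linarith)
      have hd : dist x (rp (a, b)) < r := by
        simp only [rp, Prod.dist_eq, Real.dist_eq]
        refine max_lt ?_ ?_ <;> rw [abs_lt] <;> constructor <;> linarith
      refine hx ((a, b), r) ⟨s, ?_⟩ hd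
      have h1 := D.HG_lip s x (rp (a, b))
      rw [G_rp, H_rp, ← dist_eq_norm] at h1
      have := mul_lt_mul_of_pos_left hd h4
      rw [lt_div_iff₀ (by positivity)] at hr1
      have h5 : 3 * (2:ℝ) ^ D.F s * r ≤ D.Hq s (D.Gq s (a, b)) := by linarith
      exact_mod_cast h5
end Dat
end EffRat

section NoComp
namespace Dat
variable {D : Dat}

theorem Eff.approx (_h : D.Eff) {x : ℝ × ℝ} {f : ℕ → ℚ × ℚ} (hf : ∀ k, dist x (((f k).1 : ℝ), ((f k).2 : ℝ)) < (hp k : ℝ)) (s k : ℕ) :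
    ‖D.G s x - rp (D.Gq s (f k))‖ ≤ 2 ^ D.F s * hr k := by
  rw [← G_rp]
  refine (D.G_upper s _ _).trans (mul_le_mul_of_nonneg_left ?_ (by positivity))
  rw [← dist_eq_norm]
  exact (hf k).le

theorem Eff.not_computable (h : D.Eff) (hne : D.P.Nonempty)
    (hP : ∀ f : ℕ → ℚ, Computable f → ∀ y : ℝ, (∀ k, |y - f k| < hr k) → y ∉ D.P) {x : ℝ × ℝ} (hx : x ∈ D.Q)
    (hxp : x ≠ D.p) : ¬ IsComputablePoint x := by
  intro hc
  obtain ⟨f, hf, hfx⟩ := hc.approx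
  obtain ⟨n, hn⟩ := D.ne_p hxp
  have hG := D.Gi_eq hn le_rfl
  set s := D.ts n
  obtain ⟨t, ht, c, hcP, hz⟩ := (D.mem_Q_of_fan hne hxp).1 hx
  have h0 := D.Gi_ne hxp
  have ht0 : 0 < t := lt_of_le_of_ne ht.1 fun h => h0 (by rw [hz, ← h]; simp)
  obtain ⟨A, hA⟩ := hr_small (half_pos ht0)
  have hc0 : 0 ≤ c ∧ c ≤ 1 := hcP.1
  refine hP (fun k => (D.Gq s (f (k + (D.F s + 1 + A)))).2 / (D.Gq s (f (k + (D.F s + 1 + A)))).1) ?_ c ?_ hcP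
  · have e : Computable (fun k => D.Gq s (f (k + (D.F s + 1 + A)))) := 
      h.Gq.comp (Computable.const s) (hf.comp (cnadd Computable.id (Computable.const _)))
    exact cdiv (Computable.snd.comp e) (Computable.fst.comp e)
  · intro k
    have h1 := h.approx hfx s (k + (D.F s + 1 + A))
    set w := D.Gq s (f (k + (D.F s + 1 + A))) with hw
    rw [hG, hz] at h1
    have e2 : 2 ^ D.F s * hr (k + (D.F s + 1 + A)) = hr k * hr 1 * hr A := by
      rw [hr_add, hr_add, hr_add]
      have := hr_two' (D.F s)
      linear_combination hr k * hr 1 * hr A * this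
    rw [e2] at h1
    have e3 : hr 1 = 1/2 := by rw [hr_eq]; norm_num
    rw [e3] at h1
    obtain ⟨a1, a2⟩ := (norm_le_iff _ _).1 h1
    simp only [rp, Prod.fst_sub, Prod.snd_sub] at a1 a2
    rw [abs_le] at a1 a2
    have hk0 := hr_pos k
    have hk1 := hr_le_one k
    have hA0 := hr_pos A
    have hkA : hr k * hr A ≤ hr A := by nlinarith
    have hkt : hr k * hr A < hr k * (t / 2) := mul_lt_mul_of_pos_left hA hk0
    have hw1 : t / 2 < (w.1 : ℝ) := by nlinarith [a1.1, a1.2]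
    have hw0 : (0:ℝ) < w.1 := by linarith
    push_cast
    have : c - (w.2 : ℝ) / w.1 = (c * w.1 - w.2) / w.1 := by field_simp
    rw [this, abs_div, abs_of_pos hw0, div_lt_iff₀ hw0]
    have hkw : hr k * (t / 2) < hr k * w.1 := mul_lt_mul_of_pos_left hw1 hk0
    set ε := hr k * (1/2) * hr A
    have b1 : c * (t - w.1) ≤ ε := by nlinarith [a1.1, a1.2]
    have b2 : -ε ≤ c * (t - w.1) := by nlinarith [a1.1, a1.2]
    have b3 : ε = hr k * (1/2) * hr A := rfl
    rw [abs_lt]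
    constructor <;> nlinarith [a2.1, a2.2]

open Nat.Partrec in
theorem Eff.p_not_computable (h : D.Eff) 
    (ha : ∀ s, D.act s = ((Code.evaln (s.unpair.2 + 1) (Denumerable.ofNat Code s.unpair.1) 0).isSome && 
      !(Code.evaln (s.unpair.2) (Denumerable.ofNat Code s.unpair.1) 0).isSome)) : ¬ IsComputablePoint D.p := by
  intro hc
  obtain ⟨f, hf, hfx⟩ := hc.approx
  have hex : ∀ n : ℕ, ∃ y : ℕ, decide (nrm (D.Gq y.unpair.1 (f y.unpair.2)) + 2 ^ D.F y.unpair.1 * hp y.unpair.2 ≤ hp (D.dl y.unpair.1 n)) = true := by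
    intro n
    have h1 := (D.p_iff (D.ts (n+1)) (n+1)).2 (D.ts_spec (n+1))
    set s := D.ts (n+1)
    have h2 : hr (D.dl s (n+1)) < hr (D.dl s n) := hr_lt (by have := D.dl_succ s n; omega)
    obtain ⟨k, hk⟩ := hr_small (show 0 < (hr (D.dl s n) - hr (D.dl s (n+1))) / (2 * 2 ^ D.F s) from div_pos (by linarith) (by positivity))
    refine ⟨Nat.pair s k, ?_⟩
    rw [Nat.unpair_pair, decide_eq_true_eq]
    have h3 := h.approx hfx s k
    have h4 : ‖rp (D.Gq s (f k))‖ ≤ ‖D.G s D.p‖ + 2 ^ D.F s * hr k := by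
      have := norm_sub_norm_le (rp (D.Gq s (f k))) (D.G s D.p)
      rw [norm_sub_rev] at this
      linarith
    rw [lt_div_iff₀ (by positivity)] at hk
    rw [rp_nrm] at h4
    have h5 : ((nrm (D.Gq s (f k)) : ℚ) : ℝ) + 2 ^ D.F s * ((hp k : ℚ) : ℝ) ≤ ((hp (D.dl s n) : ℚ) : ℝ) := by
      change _ + 2 ^ D.F s * hr k ≤ hr _
      linarith
    exact_mod_cast h5
  have hst : ∀ n, D.St n (Nat.find (hex n)).unpair.1 := by
    intro n
    have h1 := Nat.find_spec (hex n)
    generalize Nat.find (hex n) = y at h1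
    rw [← D.p_iff]
    rw [decide_eq_true_eq] at h1
    have h2 : ((nrm (D.Gq y.unpair.1 (f y.unpair.2)) : ℚ) : ℝ) + 2 ^ D.F y.unpair.1 * ((hp y.unpair.2 : ℚ) : ℝ) ≤ ((hp (D.dl y.unpair.1 n) : ℚ) : ℝ) := by
      exact_mod_cast h1
    have h3 := h.approx hfx y.unpair.1 y.unpair.2
    rw [← rp_nrm] at h2
    change _ + 2 ^ D.F y.unpair.1 * hr y.unpair.2 ≤ hr _ at h2
    have := norm_sub_norm_le (D.G y.unpair.1 D.p) (rp (D.Gq y.unpair.1 (f y.unpair.2)))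
    linarith
  have hcomp : Computable (fun n => Nat.find (hex n)) := by
    refine Computable.find (P := fun n y => decide (nrm (D.Gq y.unpair.1 (f y.unpair.2)) + 2 ^ D.F y.unpair.1 * hp y.unpair.2 ≤ hp (D.dl y.unpair.1 n)) = true) ?_ hex
    refine ComputablePred.of_bool (f := fun p : ℕ × ℕ => decide (nrm (D.Gq p.2.unpair.1 (f p.2.unpair.2)) + 2 ^ D.F p.2.unpair.1 * hp p.2.unpair.2 ≤ hp (D.dl p.2.unpair.1 p.1))) ?_ fun _ => Iff.rfl
    have u1 : Computable (fun p : ℕ × ℕ => p.2.unpair.1) := Computable.fst.comp (Computable.unpair.comp Computable.snd)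
    have u2 : Computable (fun p : ℕ × ℕ => p.2.unpair.2) := Computable.snd.comp (Computable.unpair.comp Computable.snd)
    exact cle (cadd (cnrm.comp (h.Gq.comp u1 (hf.comp u2))) (cmul (cpw (h.F.comp u1)) (chp u2))) (chp (h.dl.comp u1 Computable.fst))
  refine ComputablePred.halting_problem 0 ?_
  let S : ℕ → ℕ := fun n => (Nat.find (hex n)).unpair.1
  have hS : Computable S := Computable.fst.comp (Computable.unpair.comp hcomp)
  refine ComputablePred.of_bool (f := fun c : Code => (Code.evaln (S (Encodable.encode c + 1)) c 0).isSome) ?_ ?_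
  · have e : Computable (fun c : Code => Code.evaln (S (Encodable.encode c + 1)) c 0) := 
      Code.primrec_evaln.to_comp.comp (((hS.comp (Computable.succ.comp Computable.encode)).pair Computable.id).pair (Computable.const 0))
    exact Primrec.option_isSome.to_comp.comp e
  · intro c
    constructor
    · intro hd
      by_contra hns
      obtain ⟨y, hy⟩ := Part.dom_iff_mem.1 hd
      obtain ⟨k, hk⟩ := Code.evaln_complete.1 hy
      have hk' : ∃ k, (Code.evaln k c 0).isSome = true := ⟨k, by rw [Option.mem_def.1 hk]; rfl⟩
      have hk1 := Nat.find_spec hk'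
      have hk2 : ∀ m < Nat.find hk', ¬ (Code.evaln m c 0).isSome = true := fun m hm => Nat.find_min hk' hm
      generalize Nat.find hk' = K at hk1 hk2
      have hSK : S (Encodable.encode c + 1) < K := by
        by_contra hle
        push Not at hle
        obtain ⟨v, hv⟩ := Option.isSome_iff_exists.1 hk1
        exact hns (by rw [Option.mem_def.1 (Code.evaln_mono hle (Option.mem_def.2 hv))]; rfl)
      obtain ⟨t, rfl⟩ : ∃ t, K = t + 1 := ⟨K - 1, by omega⟩
      have hact : D.act (Nat.pair (Encodable.encode c) t) = true := by
        rw [ha, Nat.unpair_pair]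
        simp only [Denumerable.ofNat_encode]
        rw [hk1, Bool.true_and, Bool.not_eq_true']
        exact Bool.eq_false_iff.2 (hk2 t (Nat.lt_succ_self t))
      have := hst (Encodable.encode c + 1) (Nat.pair (Encodable.encode c) t) 
        ((Nat.lt_succ_iff.1 hSK).trans (Nat.right_le_pair _ _)) hact
      rw [Dat.num, Nat.unpair_pair] at this
      simp at this
    · intro hs
      obtain ⟨v, hv⟩ := Option.isSome_iff_exists.1 hs
      exact Part.dom_iff_mem.2 ⟨v, Code.evaln_sound (Option.mem_def.2 hv)⟩
end Dat
end NoComp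

section Data
open Nat.Partrec MeasureTheory

/-- the approximation computed by the `e`-th program, if found within `k` steps -/
def dval (j : ℕ) : Option ℕ := Code.evaln j.unpair.2 (Denumerable.ofNat Code j.unpair.1) (j.unpair.1 + 4)
/-- clipping to the unit interval -/
def clp (q : ℚ) : ℚ := max 0 (min 1 q)
/-- centers of removed intervals -/
def dqc (j : ℕ) : ℚ := Option.casesOn (motive := fun _ => ℚ) (dval j) 0 (fun m => clp (Denumerable.ofNat ℚ m))
/-- radii of removed intervals -/
def drr (j : ℕ) : ℚ := Option.casesOn (motive := fun _ => ℚ) (dval j) 0 (fun _ => hp (j.unpair.1 + 4))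

theorem cdval : Computable dval :=
  Code.primrec_evaln.to_comp.comp (((Computable.snd.comp Computable.unpair).pair 
    ((Computable.ofNat Code).comp (Computable.fst.comp Computable.unpair))).pair 
    (cnadd (Computable.fst.comp Computable.unpair) (Computable.const 4)))
theorem cdqc : Computable dqc :=
  Computable.option_casesOn cdval (Computable.const 0) (g := fun _ m => clp (Denumerable.ofNat ℚ m))
    (cmax (Computable.const 0) (cmin (Computable.const 1) ((Computable.ofNat ℚ).comp Computable.snd)))
theorem cdrr : Computable drr :=
  Computable.option_casesOn (o := dval) (f := fun _ => (0:ℚ)) (g := fun j _ => hp (j.unpair.1 + 4)) cdval (Computable.const 0) 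
    (show Computable (fun p : ℕ × ℕ => hp (p.1.unpair.1 + 4)) from
      chp (cnadd (Computable.fst.comp (Computable.unpair.comp Computable.fst)) (Computable.const 4)))

theorem hp_pos (n : ℕ) : 0 < hp n := by simp [hp]
theorem hp_le_one (n : ℕ) : hp n ≤ 1 := pow_le_one₀ (by norm_num) (by norm_num)

theorem dqc_mem (j : ℕ) : 0 ≤ dqc j ∧ dqc j ≤ 1 := by
  unfold dqc
  cases dval j with
  | none => simp
  | some m => exact ⟨le_max_left _ _, max_le zero_le_one (min_le_left _ _)⟩
theorem drr_mem (j : ℕ) : 0 ≤ drr j ∧ drr j ≤ 1 := by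
  unfold drr
  cases dval j with
  | none => simp
  | some m => exact ⟨(hp_pos _).le, hp_le_one _⟩

theorem clp_dist {y : ℝ} (h0 : 0 ≤ y) (h1 : y ≤ 1) (q : ℚ) : |y - (clp q : ℝ)| ≤ |y - q| := by
  unfold clp
  push_cast
  rcases le_total (q:ℝ) 0 with h | h
  · rw [max_eq_left ((min_le_right _ _).trans h), abs_of_nonneg (by linarith), abs_of_nonneg (by linarith)]; linarith
  · rcases le_total 1 (q:ℝ) with h' | h'
    · rw [min_eq_left h', max_eq_right zero_le_one, abs_of_nonpos (by linarith), abs_of_nonpos (by linarith)]; linarith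
    · rw [min_eq_right h', max_eq_right h]

theorem dval_unique {e k k' m m' : ℕ} (h : dval (Nat.pair e k) = some m) (h' : dval (Nat.pair e k') = some m') : m = m' := by
  unfold dval at h h'
  rw [Nat.unpair_pair] at h h'
  exact Part.mem_unique (Code.evaln_sound (Option.mem_def.2 h)) (Code.evaln_sound (Option.mem_def.2 h'))

open Classical in
theorem exists_avoid : ∃ y : ℝ, 0 < y ∧ y < 1 ∧ ∀ j, (drr j : ℝ) < |y - dqc j| := by
  let a : ℕ → ℝ := fun e => if h : ∃ k, (dval (Nat.pair e k)).isSome = true then (dqc (Nat.pair e h.choose) : ℝ) else 0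
  have key : ∀ j, dval j = Option.none ∨ ((dqc j : ℝ) = a j.unpair.1 ∧ (drr j : ℝ) = hr (j.unpair.1 + 4)) := by
    intro j
    cases hd : dval j with
    | none => exact Or.inl rfl
    | some m =>
      refine Or.inr ⟨?_, by simp [drr, hd, hr]⟩
      have hj : dval (Nat.pair j.unpair.1 j.unpair.2) = some m := by rw [Nat.pair_unpair, hd]
      have h : ∃ k, (dval (Nat.pair j.unpair.1 k)).isSome = true := ⟨_, by rw [hj]; rfl⟩
      simp only [a, dif_pos h]
      obtain ⟨m', hm'⟩ := Option.isSome_iff_exists.1 h.choose_spec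
      have := dval_unique hj hm'
      subst this
      unfold dqc
      rw [hm', hd]
  have hvol : volume (⋃ e, Metric.closedBall (a e) (hr (e + 4))) < volume (Set.Ioo (0:ℝ) 1) := by
    have hs : HasSum (fun e => 2 * hr (e + 4)) (1/4) := by
      have := (hasSum_geometric_two).mul_left (1/8 : ℝ)
      have e1 : (fun e => 2 * hr (e + 4)) = fun i : ℕ => 1 / 8 * (1 / 2 : ℝ) ^ i := by
        funext e; rw [hr_add, hr_eq, hr_eq]; ring
      have e2 : (1/8 * 2 : ℝ) = 1/4 := by norm_num
      rw [e1, ← e2]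
      exact this
    calc volume (⋃ e, Metric.closedBall (a e) (hr (e + 4))) ≤ ∑' e, volume (Metric.closedBall (a e) (hr (e + 4))) := measure_iUnion_le _
      _ = ∑' e, ENNReal.ofReal (2 * hr (e + 4)) := by simp only [Real.volume_closedBall]
      _ = ENNReal.ofReal (1/4) := by
        rw [← ENNReal.ofReal_tsum_of_nonneg (fun e => by have := hr_pos (e+4); positivity) hs.summable, hs.tsum_eq]
      _ < volume (Set.Ioo (0:ℝ) 1) := by
        rw [Real.volume_Ioo]
        exact (ENNReal.ofReal_lt_ofReal_iff (by norm_num)).2 (by norm_num)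
  have : ¬ Set.Ioo (0:ℝ) 1 ⊆ ⋃ e, Metric.closedBall (a e) (hr (e + 4)) := fun h => absurd (measure_mono h) (not_le.2 hvol)
  rw [Set.not_subset] at this
  obtain ⟨y, hy, hy'⟩ := this
  refine ⟨y, hy.1, hy.2, fun j => ?_⟩
  rcases key j with h | ⟨h1, h2⟩
  · have e1 : dqc j = 0 := by unfold dqc; rw [h]
    have e2 : drr j = 0 := by unfold drr; rw [h]
    rw [e1, e2]
    simp [hy.1.ne']
  · rw [h1, h2]
    by_contra hle
    push Not at hle
    exact hy' (Set.mem_iUnion.2 ⟨j.unpair.1, by rw [Metric.mem_closedBall, Real.dist_eq]; exact hle⟩)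

/-- bounded check of the separation condition -/
def chk (s : ℕ) (c : ℚ) (m : ℕ) : Bool :=
  Nat.rec (motive := fun _ => Bool) (decide (hp m ≤ c) && decide (c + hp m ≤ 1)) 
    (fun j b => b && decide (drr j + hp m ≤ |c - dqc j|)) s

theorem chk_iff (s : ℕ) (c : ℚ) (m : ℕ) : chk s c m = true ↔ 
    (hp m ≤ c ∧ c + hp m ≤ 1) ∧ ∀ j < s, drr j + hp m ≤ |c - dqc j| := by
  induction s with
  | zero => simp [chk]
  | succ s ih =>
    have : chk (s + 1) c m = (chk s c m && decide (drr s + hp m ≤ |c - dqc s|)) := rfl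
    rw [this, Bool.and_eq_true, ih, decide_eq_true_eq, and_assoc]
    refine and_congr_right fun _ => ?_
    constructor
    · rintro ⟨h1, h2⟩ j hj
      rcases Nat.lt_succ_iff_lt_or_eq.1 hj with h | rfl
      · exact h1 j h
      · exact h2
    · intro h
      exact ⟨fun j hj => h j (hj.trans (Nat.lt_succ_self s)), h s (Nat.lt_succ_self s)⟩

theorem chk_exists (s : ℕ) : ∃ n : ℕ, chk s (Denumerable.ofNat ℚ n.unpair.1) n.unpair.2 = true := by
  obtain ⟨y, hy0, hy1, hy⟩ := exists_avoid
  have : ∃ ε : ℝ, 0 < ε ∧ ε ≤ y ∧ y + ε ≤ 1 ∧ ∀ j < s, (drr j : ℝ) + ε ≤ |y - dqc j| := by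
    induction s with
    | zero => exact ⟨min y (1 - y), lt_min hy0 (by linarith), min_le_left _ _, by linarith [min_le_right y (1 - y)], by simp⟩
    | succ s ih =>
      obtain ⟨ε, h0, h1, h2, h3⟩ := ih
      have hs := hy s
      have l1 := min_le_left ε (|y - dqc s| - drr s)
      have l2 := min_le_right ε (|y - dqc s| - drr s)
      refine ⟨min ε (|y - dqc s| - drr s), lt_min h0 (by linarith), by linarith, by linarith, fun j hj => ?_⟩
      rcases Nat.lt_succ_iff_lt_or_eq.1 hj with h | rfl
      · linarith [h3 j h]
      · linarith
  obtain ⟨ε, h0, h1, h2, h3⟩ := this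
  obtain ⟨m, hm⟩ := hr_small (half_pos h0)
  obtain ⟨c, hc1, hc2⟩ := exists_rat_btwn (show y - ε / 2 < y by linarith)
  refine ⟨Nat.pair ((Denumerable.eqv ℚ) c) m, ?_⟩
  have hcc : Denumerable.ofNat ℚ ((Denumerable.eqv ℚ) c) = c := Denumerable.ofNat_encode c
  rw [Nat.unpair_pair, hcc]
  have e : ((hp m : ℚ) : ℝ) = hr m := rfl
  rw [chk_iff]
  refine ⟨⟨?_, ?_⟩, fun j hj => ?_⟩
  · have : ((hp m : ℚ) : ℝ) ≤ c := by rw [e]; linarith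
    exact_mod_cast this
  · have : (c : ℝ) + ((hp m : ℚ) : ℝ) ≤ 1 := by rw [e]; linarith
    exact_mod_cast this
  · have h4 : |y - dqc j| ≤ |y - c| + |(c:ℝ) - dqc j| := abs_sub_le _ _ _
    rw [abs_of_nonneg (show 0 ≤ y - c by linarith)] at h4
    have := h3 j hj
    have : (drr j : ℝ) + ((hp m : ℚ) : ℝ) ≤ |(c:ℝ) - dqc j| := by rw [e]; linarith
    exact_mod_cast this

/-- search -/
def srch (s : ℕ) : ℕ := Nat.find (chk_exists s)

theorem csrch : Computable srch := by
  refine Computable.find (P := fun s n => chk s (Denumerable.ofNat ℚ n.unpair.1) n.unpair.2 = true) ?_ chk_exists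
  refine ComputablePred.of_bool (f := fun p : ℕ × ℕ => chk p.1 (Denumerable.ofNat ℚ p.2.unpair.1) p.2.unpair.2) ?_ fun _ => Iff.rfl
  have u1 : Computable (fun p : ℕ × ℕ => Denumerable.ofNat ℚ p.2.unpair.1) := 
    (Computable.ofNat ℚ).comp (Computable.fst.comp (Computable.unpair.comp Computable.snd))
  have u2 : Computable (fun p : ℕ × ℕ => hp p.2.unpair.2) := chp (Computable.snd.comp (Computable.unpair.comp Computable.snd))
  refine Computable.nat_rec (f := fun p : ℕ × ℕ => p.1) 
    (g := fun p => decide (hp p.2.unpair.2 ≤ Denumerable.ofNat ℚ p.2.unpair.1) && decide (Denumerable.ofNat ℚ p.2.unpair.1 + hp p.2.unpair.2 ≤ 1))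
    (h := fun p q => q.2 && decide (drr q.1 + hp p.2.unpair.2 ≤ |Denumerable.ofNat ℚ p.2.unpair.1 - dqc q.1|)) Computable.fst 
    (cand (cle u2 u1) (cle (cadd u1 u2) (Computable.const 1))) ?_
  have j : Computable (fun x : (ℕ × ℕ) × (ℕ × Bool) => x.2.1) := Computable.fst.comp Computable.snd
  exact cand (Computable.snd.comp Computable.snd) (cle (cadd (cdrr.comp j) (u2.comp Computable.fst)) 
    (cabs (csub (u1.comp Computable.fst) (cdqc.comp j))))

/-- whether a program halts exactly at a given stage -/
def dact (s : ℕ) : Bool := (Code.evaln (s.unpair.2 + 1) (Denumerable.ofNat Code s.unpair.1) 0).isSome && 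
      !(Code.evaln (s.unpair.2) (Denumerable.ofNat Code s.unpair.1) 0).isSome

theorem cdact : Computable dact := by
  have u1 : Computable (fun s : ℕ => Denumerable.ofNat Code s.unpair.1) := 
    (Computable.ofNat Code).comp (Computable.fst.comp Computable.unpair)
  have u2 : Computable (fun s : ℕ => s.unpair.2) := Computable.snd.comp Computable.unpair
  have ev : ∀ {g : ℕ → ℕ}, Computable g → Computable (fun s => (Code.evaln (g s) (Denumerable.ofNat Code s.unpair.1) 0).isSome) := 
    fun hg => Primrec.option_isSome.to_comp.comp (Code.primrec_evaln.to_comp.comp ((hg.pair u1).pair (Computable.const 0)))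
  exact cand (ev (Computable.succ.comp u2)) (Primrec.not.to_comp.comp (ev u2))

theorem dact_le {s t : ℕ} (hs : dact s = true) (ht : dact t = true) (h : s.unpair.1 = t.unpair.1) : t.unpair.2 ≤ s.unpair.2 := by
  unfold dact at hs ht
  rw [Bool.and_eq_true] at hs ht
  by_contra hlt
  push Not at hlt
  obtain ⟨v, hv⟩ := Option.isSome_iff_exists.1 hs.1
  have := Code.evaln_mono (Nat.succ_le_of_lt hlt) (Option.mem_def.2 hv)
  rw [h] at this
  have h2 := ht.2
  rw [Option.mem_def.1 this] at h2
  simp at h2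

/-- the data -/
def theDat : Dat where
  qc := dqc
  rr := drr
  c := fun s => Denumerable.ofNat ℚ (srch s).unpair.1
  M := fun s => (srch s).unpair.2
  act := dact
  hqc := dqc_mem
  hrr := drr_mem
  hc1 := fun s => ((chk_iff _ _ _).1 (Nat.find_spec (chk_exists s))).1.1
  hc2 := fun s => ((chk_iff _ _ _).1 (Nat.find_spec (chk_exists s))).1.2
  hc3 := fun s => ((chk_iff _ _ _).1 (Nat.find_spec (chk_exists s))).2
  hact := fun s t hs ht h => by
    rw [← Nat.pair_unpair s, ← Nat.pair_unpair t, h, le_antisymm (dact_le ht hs h.symm) (dact_le hs ht h)]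

theorem theDat_eff : theDat.Eff where
  qc := cdqc
  rr := cdrr
  c := (Computable.ofNat ℚ).comp (Computable.fst.comp (Computable.unpair.comp csrch))
  M := Computable.snd.comp (Computable.unpair.comp csrch)
  act := cdact

theorem theDat_nonempty : theDat.P.Nonempty := by
  obtain ⟨y, hy0, hy1, hy⟩ := exists_avoid
  exact ⟨y, ⟨hy0.le, hy1.le⟩, fun j => (hy j).le⟩

theorem theDat_avoid (f : ℕ → ℚ) (hf : Computable f) (y : ℝ) (hy : ∀ k, |y - f k| < hr k) : y ∉ theDat.P := by
  rintro ⟨⟨h0, h1⟩, h⟩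
  obtain ⟨c, hc⟩ := hf.exists_code_fun
  obtain ⟨k, m, hk, hm⟩ := hc (Encodable.encode c + 4)
  have hd : dval (Nat.pair (Encodable.encode c) k) = some m := by
    unfold dval
    simp only [Nat.unpair_pair, Denumerable.ofNat_encode]
    exact hk
  have := h (Nat.pair (Encodable.encode c) k)
  have e1 : theDat.qc (Nat.pair (Encodable.encode c) k) = clp (f (Encodable.encode c + 4)) := by
    change dqc _ = _
    unfold dqc
    rw [hd, ← hm]
  have e2 : theDat.rr (Nat.pair (Encodable.encode c) k) = hp (Encodable.encode c + 4) := by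
    change drr _ = _
    unfold drr
    rw [hd, Nat.unpair_pair]
  rw [e1, e2] at this
  have h5 := clp_dist h0 h1 (f (Encodable.encode c + 4))
  have h6 : |y - f (Encodable.encode c + 4)| < ((hp (Encodable.encode c + 4) : ℚ) : ℝ) := hy _
  linarith

theorem theDat_gappy : Gappy theDat.P := by
  intro a b hab
  obtain ⟨r, h1, h2⟩ := exists_rat_btwn hab
  refine ⟨r, h1, h2, theDat_avoid (fun _ => r) (Computable.const r) r fun k => ?_⟩
  rw [sub_self, abs_zero]
  exact hr_pos k
end Data

theorem exists_pi01_dendroid_without_computable_points :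
    ∃ Q : Set (ℝ × ℝ), Q.Nonempty ∧ IsPi01Closed Q ∧ IsDendroid Q ∧
      ∀ x ∈ Q, ¬ IsComputablePoint x := by
  refine ⟨theDat.Q, ⟨_, theDat.p_mem_Q theDat_nonempty⟩, theDat_eff.pi01, 
    theDat.Q_dendroid theDat_nonempty theDat_gappy, fun x hx => ?_⟩
  by_cases hxp : x = theDat.p
  · rw [hxp]
    exact theDat_eff.p_not_computable fun s => rfl
  · exact theDat_eff.not_computable theDat_nonempty theDat_avoid hx hxp
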